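/- arXiv:1504.00538 — 2 statements merged into one kernel-verified Lean document; each statement's English description precedes it below -/
import Mathlib

section
/- Let A* be a block-nondegenerate local maximizer of f over the feasible set. Then there exists δ > 0 such that for every HOOI sequence {A^k}_{k≥0} with ‖A⁰ − A*‖_F ≤ δ, there exists a feasible point Ā that is a local maximizer of f such that for every n, Aₙ^k(Aₙ^k)ᵀ → ĀₙĀₙᵀ in Frobenius norm as k → ∞. -/
open Matrix BigOperators Filter

def froSq {ι κ : Type*} [Fintype ι] [Fintype κ] (M : Matrix ι κ ℝ) : ℝ :=
  ∑ i, ∑ j, (M i j) ^ 2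

noncomputable def fro {ι κ : Type*} [Fintype ι] [Fintype κ] (M : Matrix ι κ ℝ) : ℝ :=
  Real.sqrt (froSq M)

noncomputable def eigList {m : ℕ} {κ : Type*} [Fintype κ] (Y : Matrix (Fin m) κ ℝ) : List ℝ :=
  ((((Finset.univ : Finset (Fin m)).val.map
      (fun j => (Matrix.isHermitian_mul_conjTranspose_self Y).eigenvalues j)).sort (· ≤ ·)).reverse)

noncomputable def sval {m : ℕ} {κ : Type*} [Fintype κ] (Y : Matrix (Fin m) κ ℝ) (i : ℕ) : ℝ :=
  Real.sqrt ((eigList Y).getD (i - 1) 0)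

/-- Feasibility: every factor matrix has orthonormal columns. -/
def TFeas {N : ℕ} {I r : Fin N → ℕ}
    (A : (n : Fin N) → Matrix (Fin (I n)) (Fin (r n)) ℝ) : Prop :=
  ∀ n, (A n)ᵀ * A n = 1

/-- `Gₙ(A) = unfoldₙ(X ×₁ A₁ᵀ ⋯ ×_{n−1} A_{n−1}ᵀ ×_{n+1} A_{n+1}ᵀ ⋯ ×_N A_Nᵀ)`. -/
noncomputable def Gmat {N : ℕ} {I r : Fin N → ℕ} (X : ((n : Fin N) → Fin (I n)) → ℝ)
    (A : (n : Fin N) → Matrix (Fin (I n)) (Fin (r n)) ℝ) (n : Fin N) :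
    Matrix (Fin (I n)) ((m : {m : Fin N // m ≠ n}) → Fin (r m.1)) ℝ :=
  fun j c => ∑ idx : ((m : {m : Fin N // m ≠ n}) → Fin (I m.1)),
    X (fun i => if h : i = n then Fin.cast (by rw [h]) j else idx ⟨i, h⟩) *
      ∏ m : {m : Fin N // m ≠ n}, A m.1 (idx m) (c m)

/-- `f(A) = ‖X ×₁ A₁ᵀ ⋯ ×_N A_Nᵀ‖_F²`. -/
noncomputable def fval {N : ℕ} {I r : Fin N → ℕ} (X : ((n : Fin N) → Fin (I n)) → ℝ)
    (A : (n : Fin N) → Matrix (Fin (I n)) (Fin (r n)) ℝ) : ℝ :=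
  ∑ c : ((n : Fin N) → Fin (r n)),
    (∑ idx : ((n : Fin N) → Fin (I n)), X idx * ∏ n, A n (idx n) (c n)) ^ 2

/-- A critical point: `Gₙ(A)Gₙ(A)ᵀAₙ = AₙAₙᵀGₙ(A)Gₙ(A)ᵀAₙ` for all `n`. -/
def Critical {N : ℕ} {I r : Fin N → ℕ} (X : ((n : Fin N) → Fin (I n)) → ℝ)
    (A : (n : Fin N) → Matrix (Fin (I n)) (Fin (r n)) ℝ) : Prop :=
  ∀ n, Gmat X A n * (Gmat X A n)ᵀ * A n =
    A n * (A n)ᵀ * (Gmat X A n * (Gmat X A n)ᵀ * A n)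

/-- A block-wise maximizer. -/
def BlockMax {N : ℕ} {I r : Fin N → ℕ} (X : ((n : Fin N) → Fin (I n)) → ℝ)
    (A : (n : Fin N) → Matrix (Fin (I n)) (Fin (r n)) ℝ) : Prop :=
  ∀ n, ∀ B : Matrix (Fin (I n)) (Fin (r n)) ℝ, Bᵀ * B = 1 →
    froSq (Bᵀ * Gmat X A n) ≤ froSq ((A n)ᵀ * Gmat X A n)

/-- Block-nondegeneracy: `σ_{rₙ}(Gₙ(A)) > σ_{rₙ+1}(Gₙ(A))` for all `n`. -/
def NonDeg {N : ℕ} {I r : Fin N → ℕ} (X : ((n : Fin N) → Fin (I n)) → ℝ)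
    (A : (n : Fin N) → Matrix (Fin (I n)) (Fin (r n)) ℝ) : Prop :=
  ∀ n, sval (Gmat X A n) (r n + 1) < sval (Gmat X A n) (r n)

/-- The hybrid tuple used in HOOI: the already-updated blocks `i < n` come from
`Anew`, the rest from `Aold`. -/
def hyb {N : ℕ} {I r : Fin N → ℕ}
    (Aold Anew : (n : Fin N) → Matrix (Fin (I n)) (Fin (r n)) ℝ) (n : Fin N) :
    (i : Fin N) → Matrix (Fin (I i)) (Fin (r i)) ℝ :=
  fun i => if i < n then Anew i else Aold i

/-- `Gₙ^k = unfoldₙ(X ×₁ (A₁^{k+1})ᵀ ⋯ ×_{n−1} (A_{n−1}^{k+1})ᵀ ×_{n+1} (A_{n+1}^k)ᵀ ⋯ ×_N (A_N^k)ᵀ)`. -/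
noncomputable def Gseq {N : ℕ} {I r : Fin N → ℕ} (X : ((n : Fin N) → Fin (I n)) → ℝ)
    (A : ℕ → (n : Fin N) → Matrix (Fin (I n)) (Fin (r n)) ℝ) (k : ℕ) (n : Fin N) :
    Matrix (Fin (I n)) ((m : {m : Fin N // m ≠ n}) → Fin (r m.1)) ℝ :=
  Gmat X (hyb (A k) (A (k + 1)) n) n

/-- A HOOI sequence. -/
def IsHOOI {N : ℕ} {I r : Fin N → ℕ} (X : ((n : Fin N) → Fin (I n)) → ℝ)
    (A : ℕ → (n : Fin N) → Matrix (Fin (I n)) (Fin (r n)) ℝ) : Prop :=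
  (∀ k, TFeas (A k)) ∧
  ∀ k (n : Fin N), ∀ B : Matrix (Fin (I n)) (Fin (r n)) ℝ, Bᵀ * B = 1 →
    froSq (Bᵀ * Gseq X A k n) ≤ froSq ((A (k + 1) n)ᵀ * Gseq X A k n)

/-- A greedy HOOI sequence. -/
def IsGreedyHOOI {N : ℕ} {I r : Fin N → ℕ} (X : ((n : Fin N) → Fin (I n)) → ℝ)
    (A : ℕ → (n : Fin N) → Matrix (Fin (I n)) (Fin (r n)) ℝ) : Prop :=
  IsHOOI X A ∧
  ∀ k (n : Fin N), ∀ B : Matrix (Fin (I n)) (Fin (r n)) ℝ, Bᵀ * B = 1 →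
    (∀ C : Matrix (Fin (I n)) (Fin (r n)) ℝ, Cᵀ * C = 1 →
      froSq (Cᵀ * Gseq X A k n) ≤ froSq (Bᵀ * Gseq X A k n)) →
    fro (A (k + 1) n - A k n) ≤ fro (B - A k n)

/-- `Ā` is a limit point of the sequence `{A^k}` (blockwise in Frobenius norm). -/
def IsLimitPt {N : ℕ} {I r : Fin N → ℕ}
    (A : ℕ → (n : Fin N) → Matrix (Fin (I n)) (Fin (r n)) ℝ)
    (Abar : (n : Fin N) → Matrix (Fin (I n)) (Fin (r n)) ℝ) : Prop :=
  ∃ φ : ℕ → ℕ, StrictMono φ ∧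
    ∀ n, Tendsto (fun k => fro (A (φ k) n - Abar n)) atTop (nhds 0)

/-- `‖A − B‖_F = √(∑ₙ ‖Aₙ − Bₙ‖_F²)` on tuples. -/
noncomputable def tdist {N : ℕ} {I r : Fin N → ℕ}
    (A B : (n : Fin N) → Matrix (Fin (I n)) (Fin (r n)) ℝ) : ℝ :=
  Real.sqrt (∑ n, froSq (A n - B n))

/-- A local maximizer of `f` over the feasible set. -/
def LocalMax {N : ℕ} {I r : Fin N → ℕ} (X : ((n : Fin N) → Fin (I n)) → ℝ)
    (A : (n : Fin N) → Matrix (Fin (I n)) (Fin (r n)) ℝ) : Prop :=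
  TFeas A ∧ ∃ ε > (0 : ℝ), ∀ B : (n : Fin N) → Matrix (Fin (I n)) (Fin (r n)) ℝ,
    TFeas B → tdist B A ≤ ε → fval X B ≤ fval X A

/-- A globally optimal solution. -/
def GlobalMax {N : ℕ} {I r : Fin N → ℕ} (X : ((n : Fin N) → Fin (I n)) → ℝ)
    (A : (n : Fin N) → Matrix (Fin (I n)) (Fin (r n)) ℝ) : Prop :=
  TFeas A ∧ ∀ B : (n : Fin N) → Matrix (Fin (I n)) (Fin (r n)) ℝ,
    TFeas B → fval X B ≤ fval X A

/-!
The objective depends on `A` only through the orthogonal projections `Pₙ = AₙAₙᵀ`, and it is the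
restriction of a multilinear form `F` to a product of Grassmannians. A HOOI sweep maximizes `F`
over one projection after the other. At a nondegenerate local maximizer each projection is
separated from its complement by a spectral gap of the block gradient, and the gap persists nearby;
it makes every sweep gain at least a multiple of the squared step length. After a sweep the
Riemannian gradient is at most a multiple of the step length. The Łojasiewicz gradient inequality
for `F` then gives the sequence finite length, so a sequence starting close enough stays close and
converges, and the inequality in the limit forces the limit to have the same value of `F` as the
given maximizer, which makes it a local maximizer too.

The Łojasiewicz inequality is algebraic. Let `f = F(P*) - F`, where `f ≠ 0`, and consider the real
algebra generated by the entries of the projections and of `f⁻¹ grad F`. In its module of Kähler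
differentials `f` divides `df`. In a finitely generated algebra over a field of characteristic zero
this forces `f` to be a unit, since `df / f` has a pole along every component of the zero locus of
`f`: normalizing and localizing reduces this to a discrete valuation ring, where it is the statement
that a logarithmic differential is not regular. So `f⁻¹` is a polynomial in the generators, which
bounds `1 / f` by a power of `max 1 (‖grad F‖ / f)`.
-/

universe u v

namespace HOOI

section Differentials
open IsLocalRing KaehlerDifferential

variable {k O : Type*} [Field k] [CommRing O] [IsDomain O] [IsDiscreteValuationRing O]
  [Algebra k O]

theorem not_formallyUnramified_of_isDiscreteValuationRing [Algebra.EssFiniteType k O] :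
    ¬ Algebra.FormallyUnramified k (FractionRing O) := by
  intro _
  have : Algebra.EssFiniteType O (FractionRing O) := .of_isLocalization _ (nonZeroDivisors O)
  have : Algebra.EssFiniteType k (FractionRing O) := .comp k O _
  have : Module.Finite k (FractionRing O) := Algebra.FormallyUnramified.finite_of_free k _
  have : Algebra.IsIntegral k O := ⟨fun x => by
    rw [← isIntegral_algebraMap_iff (IsFractionRing.injective O (FractionRing O))]
    exact Algebra.IsIntegral.isIntegral _⟩
  exact IsDiscreteValuationRing.not_isField O
    (isField_of_isIntegral_of_isField' (Field.toIsField k))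

theorem smul_D_ne_zero_of_span_eq_top [Algebra.EssFiniteType k O] {a t : O}
    (ht : Submodule.span O {D k O t} = ⊤) (ha : a ≠ 0) : a • D k O t ≠ 0 := by
  intro h
  apply not_formallyUnramified_of_isDiscreteValuationRing (k := k) (O := O)
  have hmap (ω : Ω[O⁄k]) : KaehlerDifferential.map k k O (FractionRing O) ω = 0 := by
    obtain ⟨b, rfl⟩ := Submodule.mem_span_singleton.1 (ht ▸ Submodule.mem_top : ω ∈ _)
    rw [← smul_eq_zero_iff_right (r := algebraMap O (FractionRing O) a)
      (by simpa using ha), algebraMap_smul, ← map_smul, smul_comm, h, smul_zero, map_zero]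
  rw [Algebra.formallyUnramified_iff, ← Submodule.subsingleton_iff (FractionRing O),
    ← subsingleton_iff_bot_eq_top, ← KaehlerDifferential.span_range_map_derivation_of_isLocalization
      k O (FractionRing O) (nonZeroDivisors O), eq_comm, Submodule.span_eq_bot]
  rintro _ ⟨x, rfl⟩
  exact hmap _

theorem span_D_irreducible_eq_top [CharZero k] [Algebra.EssFiniteType k O]
    [Algebra.IsAlgebraic k (ResidueField O)] {t : O} (ht : Irreducible t) :
    Submodule.span O {D k O t} = ⊤ := by
  rw [eq_top_iff]
  apply Submodule.le_of_le_smul_of_le_jacobson_bot Module.Finite.fg_top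
    (maximalIdeal_le_jacobson ⊥)
  rw [← span_range_derivation, Submodule.span_le]
  rintro _ ⟨x, rfl⟩
  set p := minpoly k (residue O x)
  have hint : IsIntegral k (residue O x) := Algebra.IsIntegral.isIntegral _
  have hres (q : Polynomial k) :
      residue O (Polynomial.aeval x q) = Polynomial.aeval (residue O x) q :=
    (Polynomial.aeval_algebraMap_apply (ResidueField O) x q).symm
  obtain ⟨y, hy⟩ : t ∣ Polynomial.aeval x p := by
    rw [← Ideal.mem_span_singleton, ← ht.maximalIdeal_eq, ← residue_eq_zero_iff, hres,
      minpoly.aeval]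
  obtain ⟨u, hu⟩ : IsUnit (Polynomial.aeval x p.derivative) := by
    rw [← residue_ne_zero_iff_isUnit, hres]
    exact (minpoly.irreducible hint).separable.aeval_derivative_ne_zero (minpoly.aeval _ _)
  have hD : D k O x = (↑u⁻¹ : O) • (y • D k O t + t • D k O y) := by
    rw [add_comm, ← Derivation.leibniz, ← hy, Derivation.map_aeval, ← hu, smul_smul,
      Units.inv_mul, one_smul]
  rw [hD, SetLike.mem_coe]
  refine Submodule.smul_mem _ _ (Submodule.add_mem_sup
    (Submodule.smul_mem _ _ (Submodule.mem_span_singleton_self _))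
    (Submodule.smul_mem_smul ?_ (Submodule.subset_span ⟨y, rfl⟩)))
  exact ht.not_isUnit

theorem D_ne_smul_of_isAlgebraic_residueField [CharZero k] [Algebra.EssFiniteType k O]
    [Algebra.IsAlgebraic k (ResidueField O)] {f : O} (hf₀ : f ≠ 0) (hf : ¬ IsUnit f)
    (ω : Ω[O⁄k]) : f • ω ≠ D k O f := by
  obtain ⟨t, ht⟩ := IsDiscreteValuationRing.exists_irreducible O
  obtain ⟨m, u, rfl⟩ := IsDiscreteValuationRing.eq_unit_mul_pow_irreducible hf₀ ht
  have hspan := span_D_irreducible_eq_top (k := k) ht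
  have hgen (ω : Ω[O⁄k]) : ∃ b : O, b • D k O t = ω :=
    Submodule.mem_span_singleton.1 (hspan ▸ Submodule.mem_top)
  obtain ⟨m, rfl⟩ : ∃ l, m = l + 1 := Nat.exists_eq_succ_of_ne_zero (by rintro rfl; simp at hf)
  intro hω
  obtain ⟨b, rfl⟩ := hgen ω
  obtain ⟨c, hc⟩ := hgen (D k O u)
  have hunit : IsUnit ((m + 1 : ℕ) * u : O) := by
    refine .mul ?_ u.isUnit
    rw [← map_natCast (algebraMap k O)]
    exact (IsUnit.mk0 _ (Nat.cast_ne_zero.2 m.succ_ne_zero)).map _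
  have hcoeff : ((m + 1 : ℕ) * u + t * (c - u * b) : O) ≠ 0 := fun h =>
    ht.not_isUnit (isUnit_of_dvd_unit ((dvd_neg.2 (dvd_mul_right t (c - u * b))))
      (eq_neg_of_add_eq_zero_left h ▸ hunit))
  refine smul_D_ne_zero_of_span_eq_top hspan (mul_ne_zero (pow_ne_zero m ht.ne_zero) hcoeff) ?_
  rw [Derivation.leibniz, Derivation.leibniz_pow, ← hc, Nat.add_sub_cancel, ← sub_eq_zero] at hω
  rw [← neg_eq_zero, ← hω]
  module

theorem smul_map_eq_D_algebraMap {k k' A B : Type*} [CommRing k] [CommRing k'] [CommRing A]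
    [CommRing B] [Algebra k k'] [Algebra k A] [Algebra k' B] [Algebra k B] [Algebra A B]
    [IsScalarTower k k' B] [IsScalarTower k A B] [SMulCommClass k' A B] {f : A} {ω : Ω[A⁄k]}
    (h : f • ω = D k A f) :
    algebraMap A B f • KaehlerDifferential.map k k' A B ω = D k' B (algebraMap A B f) := by
  rw [← KaehlerDifferential.map_D k k' A B, ← h, map_smul, algebraMap_smul]

theorem isAlgebraic_of_forall_mem_range {k F L ι : Type*} [Field k] [Field F] [Field L]
    [Algebra k F] [Algebra F L] [Algebra k L] [IsScalarTower k F L] {x : ι → L}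
    (hx : IsTranscendenceBasis k x) (hxF : ∀ i, x i ∈ Set.range (algebraMap F L)) :
    Algebra.IsAlgebraic F L := by
  let e := AlgEquiv.ofInjectiveField (IsScalarTower.toAlgHom k F L)
  have hle : Algebra.adjoin k (Set.range x) ≤ (IsScalarTower.toAlgHom k F L).range :=
    Algebra.adjoin_le (Set.range_subset_iff.2 hxF)
  have := hx.isAlgebraic
  refine Algebra.IsAlgebraic.ringHom_of_comp_eq
    (e.symm.toAlgHom.comp (Subalgebra.inclusion hle)) (RingHom.id L)
    (e.symm.injective.comp (Subalgebra.inclusion_injective hle)) Function.surjective_id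
    (RingHom.ext fun p => ?_)
  exact congrArg Subtype.val (e.apply_symm_apply (Subalgebra.inclusion hle p))

theorem exists_field_isAlgebraic_residueField (k : Type u) (O : Type v) [Field k] [CommRing O]
    [IsLocalRing O] [Algebra k O] :
    ∃ (F : Type (max u v)) (_ : Field F) (_ : Algebra k F) (_ : Algebra F O),
      IsScalarTower k F O ∧ Algebra.IsAlgebraic F (ResidueField O) := by
  obtain ⟨ι, x, hx⟩ := exists_isTranscendenceBasis' k (ResidueField O)
  choose u hu using fun i => residue_surjective (x i)
  have hunit (p : nonZeroDivisors (MvPolynomial ι k)) : IsUnit (MvPolynomial.aeval u p.1) := by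
    rw [← residue_ne_zero_iff_isUnit]
    refine fun h => nonZeroDivisors.coe_ne_zero p (hx.1.eq_zero_of_aeval_eq_zero _ ?_)
    rw [← h, ← funext hu]
    exact MvPolynomial.aeval_algebraMap_apply (ResidueField O) u p.1
  let φ : FractionRing (MvPolynomial ι k) →ₐ[k] O := IsLocalization.liftAlgHom hunit
  let := φ.toRingHom.toAlgebra
  have : IsScalarTower k (FractionRing (MvPolynomial ι k)) O :=
    .of_algebraMap_eq' φ.comp_algebraMap.symm
  refine ⟨FractionRing (MvPolynomial ι k), inferInstance, inferInstance, inferInstance, this,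
    isAlgebraic_of_forall_mem_range hx fun i =>
      ⟨algebraMap (MvPolynomial ι k) _ (MvPolynomial.X i), ?_⟩⟩
  rw [← hu]
  exact congrArg (residue O) ((IsLocalization.lift_eq _ _).trans (MvPolynomial.aeval_X u i))

theorem D_ne_smul_of_isDiscreteValuationRing [CharZero k] [Algebra.EssFiniteType k O]
    {f : O} (hf₀ : f ≠ 0) (hf : ¬ IsUnit f) (ω : Ω[O⁄k]) : f • ω ≠ D k O f := by
  intro h
  obtain ⟨F, _, _, _, _, _⟩ := exists_field_isAlgebraic_residueField k O
  have : Algebra.EssFiniteType F O := .of_comp k F O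
  have : CharZero F := charZero_of_injective_algebraMap (algebraMap k F).injective
  have hF := smul_map_eq_D_algebraMap (k' := F) (B := O) h
  rw [Algebra.algebraMap_self_apply] at hF
  exact D_ne_smul_of_isAlgebraic_residueField hf₀ hf _ hF

end Differentials

section UnitCriterion
open KaehlerDifferential

theorem finite_integralClosure_fractionRing (k A : Type*) [Field k] [CharZero k] [CommRing A]
    [IsDomain A] [Algebra k A] [Algebra.FiniteType k A] :
    Module.Finite A (integralClosure A (FractionRing A)) := by
  obtain ⟨s, g, hg, hfin⟩ := exists_finite_inj_algHom_of_fg k A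
  let R := MvPolynomial (Fin s) k
  let : Algebra R A := g.toRingHom.toAlgebra
  have : Module.Finite R A := hfin
  have : FaithfulSMul R A := (faithfulSMul_iff_algebraMap_injective R A).2 hg
  let := FractionRing.liftAlgebra R (FractionRing A)
  have : IsIntegralClosure (integralClosure A (FractionRing A)) R (FractionRing A) := by
    refine ⟨Subtype.val_injective, fun {x} => ⟨fun hx => ⟨⟨x, hx.tower_top⟩, rfl⟩, ?_⟩⟩
    rintro ⟨y, rfl⟩
    exact isIntegral_trans _ y.2
  have : Module.Finite R (integralClosure A (FractionRing A)) :=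
    IsIntegralClosure.finite R (FractionRing R) (FractionRing A) _
  exact .of_restrictScalars_finite R A _

theorem isDiscreteValuationRing_localization_of_mem_minimalPrimes {C : Type*} [CommRing C]
    [IsDomain C] [IsNoetherianRing C] [IsIntegrallyClosed C] {f : C} (hf : f ≠ 0) {P : Ideal C}
    (hP : P ∈ (Ideal.span {f}).minimalPrimes) :
    haveI := hP.isPrime
    IsDiscreteValuationRing (Localization.AtPrime P) := by
  have := hP.isPrime
  have hPbot : P ≠ ⊥ := fun h => hf (by simpa [h, Ideal.span_le] using hP.1.2)
  have hfield : ¬ IsField (Localization.AtPrime P) :=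
    IsLocalization.AtPrime.not_isField C hPbot _
  have : Ring.KrullDimLE 1 (Localization.AtPrime P) := by
    rw [Ring.krullDimLE_iff, IsLocalization.AtPrime.ringKrullDim_eq_height P]
    exact_mod_cast Ideal.height_le_one_of_isPrincipal_of_mem_minimalPrimes (Ideal.span {f}) P hP
  have : Ring.DimensionLEOne (Localization.AtPrime P) :=
    ⟨fun h₀ h => h.isMaximal_of_ne_bot h₀⟩
  have : IsIntegrallyClosed (Localization.AtPrime P) :=
    isIntegrallyClosed_of_isLocalization _ P.primeCompl P.primeCompl_le_nonZeroDivisors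
  have : IsDedekindDomain (Localization.AtPrime P) := { }
  exact ((IsDiscreteValuationRing.TFAE _ hfield).out 0 2).2 this

variable {k A : Type*} [Field k] [CharZero k] [CommRing A] [Algebra k A] [Algebra.FiniteType k A]

theorem isUnit_of_smul_eq_D_of_isIntegrallyClosed [IsDomain A] [IsIntegrallyClosed A] {f : A}
    (hf : f ≠ 0) {ω : Ω[A⁄k]} (h : f • ω = D k A f) : IsUnit f := by
  by_contra hunit
  have : IsNoetherianRing A := Algebra.FiniteType.isNoetherianRing k A
  obtain ⟨P, hP⟩ := Ideal.nonempty_minimalPrimes (mt Ideal.span_singleton_eq_top.1 hunit)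
  have := hP.isPrime
  have := isDiscreteValuationRing_localization_of_mem_minimalPrimes hf hP
  have hfP : f ∈ P := hP.1.2 (Ideal.mem_span_singleton_self _)
  refine D_ne_smul_of_isDiscreteValuationRing (f := algebraMap A (Localization.AtPrime P) f)
    (by simpa using hf) ?_ _ (smul_map_eq_D_algebraMap (k' := k) h)
  rwa [IsLocalization.AtPrime.isUnit_to_map_iff _ P, Ideal.mem_primeCompl_iff, not_not]

theorem isUnit_of_smul_eq_D_of_isDomain [IsDomain A] {f : A} (hf : f ≠ 0) {ω : Ω[A⁄k]}
    (h : f • ω = D k A f) : IsUnit f := by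
  let C := integralClosure A (FractionRing A)
  have := finite_integralClosure_fractionRing k A
  have : Algebra.FiniteType k C := .trans (S := A) inferInstance inferInstance
  have : IsIntegrallyClosed C :=
    integralClosure.isIntegrallyClosedOfFiniteExtension (FractionRing A)
  have : IsLocalHom (algebraMap A C) :=
    (algebraMap_isIntegral_iff.2 inferInstance).isLocalHom (FaithfulSMul.algebraMap_injective A C)
  have hfC : algebraMap A C f ≠ 0 := by simpa using hf
  exact (isUnit_of_smul_eq_D_of_isIntegrallyClosed hfC
    (smul_map_eq_D_algebraMap (k' := k) h)).of_map

theorem isUnit_of_smul_eq_D {f : A} (hf : f ∈ nonZeroDivisors A) {ω : Ω[A⁄k]}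
    (h : f • ω = D k A f) : IsUnit f := by
  by_contra hunit
  obtain ⟨M, hM, hfM⟩ := exists_max_ideal_of_mem_nonunits hunit
  obtain ⟨q, hq, hqM⟩ := Ideal.exists_minimalPrimes_le (bot_le (a := M))
  have := hq.isPrime
  have hfq : Ideal.Quotient.mk q f ≠ 0 := fun h0 =>
    Set.disjoint_left.1 (Ideal.disjoint_nonZeroDivisors_of_mem_minimalPrimes hq)
      (Ideal.Quotient.eq_zero_iff_mem.1 h0) hf
  have hfu := isUnit_of_smul_eq_D_of_isDomain hfq (smul_map_eq_D_algebraMap (k' := k) h)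
  have := Ideal.Quotient.nontrivial_iff.2 hM.ne_top
  have hfM_unit := hfu.map (Ideal.Quotient.factor hqM)
  rw [Ideal.Quotient.factor_mk, Ideal.Quotient.eq_zero_iff_mem.2 hfM] at hfM_unit
  exact not_isUnit_zero hfM_unit

end UnitCriterion

section Lojasiewicz
open KaehlerDifferential

variable {V ι : Type*} {y : ι → V → ℝ} {M : V → ℝ}

theorem exists_abs_le_mul_pow_of_mem_adjoin (hM : ∀ v, 1 ≤ M v) (hy : ∀ i v, |y i v| ≤ M v)
    {h : V → ℝ} (hh : h ∈ Algebra.adjoin ℝ (Set.range y)) :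
    ∃ C : ℝ, 0 ≤ C ∧ ∃ N : ℕ, ∀ v, |h v| ≤ C * M v ^ N := by
  induction hh using Algebra.adjoin_induction with
  | mem h hh =>
    obtain ⟨i, rfl⟩ := hh
    exact ⟨1, zero_le_one, 1, fun v => by simpa using hy i v⟩
  | algebraMap r => exact ⟨|r|, abs_nonneg r, 0, fun v => by simp⟩
  | add p q _ _ hp hq =>
    obtain ⟨C, hC, N, hCN⟩ := hp
    obtain ⟨C', hC', N', hCN'⟩ := hq
    refine ⟨C + C', by positivity, max N N', fun v => (abs_add_le _ _).trans ?_⟩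
    rw [add_mul]
    gcongr
    · exact (hCN v).trans (by gcongr; exacts [hM v, le_max_left N N'])
    · exact (hCN' v).trans (by gcongr; exacts [hM v, le_max_right N N'])
  | mul p q _ _ hp hq =>
    obtain ⟨C, hC, N, hCN⟩ := hp
    obtain ⟨C', hC', N', hCN'⟩ := hq
    refine ⟨C * C', by positivity, N + N', fun v => ?_⟩
    have hMv : 0 ≤ M v := zero_le_one.trans (hM v)
    calc |p v * q v| = |p v| * |q v| := abs_mul _ _
      _ ≤ (C * M v ^ N) * (C' * M v ^ N') := by gcongr; exacts [hCN v, hCN' v]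
      _ = C * C' * M v ^ (N + N') := by ring

theorem exists_one_le_mul_pow_of_smul_eq_D [Finite ι] (hM : ∀ v, 1 ≤ M v)
    (hy : ∀ i v, |y i v| ≤ M v)
    {f : Algebra.adjoin ℝ (Set.range y)} (hf : ∀ v, f.1 v ≠ 0)
    {ω : Ω[Algebra.adjoin ℝ (Set.range y)⁄ℝ]} (hω : f • ω = D ℝ _ f) :
    ∃ C : ℝ, 0 ≤ C ∧ ∃ N : ℕ, ∀ v, 1 ≤ C * |f.1 v| * M v ^ N := by
  have : Algebra.FiniteType ℝ (Algebra.adjoin ℝ (Set.range y)) :=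
    .adjoin_of_finite (Set.finite_range y)
  have hreg : f ∈ nonZeroDivisors (Algebra.adjoin ℝ (Set.range y)) := by
    refine mem_nonZeroDivisors_of_injective (f := Subalgebra.val _) Subtype.val_injective ?_
    exact IsUnit.mem_nonZeroDivisors (Pi.isUnit_iff.2 fun v => (hf v).isUnit)
  obtain ⟨h, hfh⟩ := (isUnit_of_smul_eq_D hreg hω).exists_right_inv
  obtain ⟨C, hC, N, hCN⟩ := exists_abs_le_mul_pow_of_mem_adjoin hM hy h.2
  refine ⟨C, hC, N, fun v => ?_⟩
  calc 1 = |f.1 v| * |h.1 v| := by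
        rw [← abs_mul, ← abs_one]
        exact congrArg abs (congrFun (congrArg Subtype.val hfh) v).symm
    _ ≤ |f.1 v| * (C * M v ^ N) := by gcongr; exact hCN v
    _ = C * |f.1 v| * M v ^ N := by ring

theorem exists_mul_rpow_le_of_one_le_mul_max_pow {C : ℝ} (hC : 0 ≤ C) (N : ℕ) :
    ∃ θ ∈ Set.Ioo (0 : ℝ) 1, ∃ κ > 0, ∃ ε > 0, ∀ s η : ℝ, 0 < s → s ≤ ε → 0 ≤ η →
      1 ≤ C * s * max 1 (η / s) ^ N → κ * s ^ θ ≤ η := by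
  refine ⟨(N + 1 : ℕ) / (N + 2 : ℕ), ⟨by positivity, ?_⟩, ((C + 1)⁻¹) ^ ((N + 2 : ℕ) : ℝ)⁻¹,
    by positivity, (C + 1)⁻¹, by positivity, fun s η hs hsε hη h => ?_⟩
  · rw [div_lt_one (by positivity)]
    exact_mod_cast Nat.lt_succ_self _
  have hCs : C * s < 1 := by
    calc C * s ≤ C * (C + 1)⁻¹ := by gcongr
      _ < 1 := by rw [← div_eq_mul_inv, div_lt_one (by positivity)]; linarith
  have hratio : 1 ≤ η / s := by
    by_contra! hlt
    rw [max_eq_left hlt.le, one_pow, mul_one] at h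
    exact h.not_gt hCs
  have hpow : s ^ (N + 1) ≤ (C + 1) * η ^ (N + 2) := by
    have : 1 ≤ (C + 1) * s * (η / s) ^ (N + 2) := by
      rw [max_eq_right hratio] at h
      refine h.trans ?_
      gcongr
      exacts [by linarith, by lia]
    calc s ^ (N + 1) ≤ s ^ (N + 1) * ((C + 1) * s * (η / s) ^ (N + 2)) :=
          le_mul_of_one_le_right (by positivity) this
      _ = (C + 1) * η ^ (N + 2) := by
          rw [div_pow]
          field_simp
          ring
  rw [← pow_le_pow_iff_left₀ (by positivity) hη (Nat.succ_ne_zero (N + 1)), mul_pow,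
    Real.rpow_inv_natCast_pow (by positivity) (Nat.succ_ne_zero _), ← Real.rpow_mul_natCast hs.le,
    div_mul_cancel₀ _ (by positivity), Real.rpow_natCast, inv_mul_le_iff₀ (by positivity)]
  exact hpow

end Lojasiewicz

section TuckerForm

theorem derivation_prod {k R M α : Type*} [CommRing k] [CommRing R] [Algebra k R] [AddCommGroup M]
    [Module R M] [Module k M] [DecidableEq α] (D : Derivation k R M) (s : Finset α) (g : α → R) :
    D (∏ i ∈ s, g i) = ∑ i ∈ s, (∏ j ∈ s.erase i, g j) • D (g i) := by
  induction s using Finset.induction_on with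
  | empty => simp
  | insert a s ha ih =>
    rw [Finset.prod_insert ha, Derivation.leibniz, ih, Finset.sum_insert ha,
      Finset.erase_insert ha, Finset.smul_sum, add_comm]
    refine congrArg₂ _ rfl (Finset.sum_congr rfl fun i hi => ?_)
    rw [Finset.erase_insert_of_ne (ne_of_mem_of_not_mem hi ha).symm,
      Finset.prod_insert (fun h => ha (Finset.mem_of_mem_erase h)), smul_smul]

variable {α : Type*} [Fintype α] [DecidableEq α] {ι : α → Type*} {R : Type*} [CommRing R]

theorem prod_update_single [∀ n, DecidableEq (ι n)] (Q : ∀ n, Matrix (ι n) (ι n) R)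
    (n : α) (i j : ι n) (idx idx' : ∀ n, ι n) :
    ∏ m, Function.update Q n (single i j 1) m (idx m) (idx' m) =
      if i = idx n ∧ j = idx' n then ∏ m ∈ Finset.univ.erase n, Q m (idx m) (idx' m) else 0 := by
  rw [← Finset.mul_prod_erase _ _ (Finset.mem_univ n), Function.update_self, single_apply]
  have herase : ∏ m ∈ Finset.univ.erase n, Function.update Q n (single i j 1) m (idx m) (idx' m) =
      ∏ m ∈ Finset.univ.erase n, Q m (idx m) (idx' m) :=
    Finset.prod_congr rfl fun m hm => by rw [Function.update_of_ne (Finset.ne_of_mem_erase hm)]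
  rw [herase, ite_mul, one_mul, zero_mul]

variable [∀ n, Fintype (ι n)]

/-- The multilinear form `Q ↦ ⟨X, X ×₁ Q₁ ⋯ ×_N Q_N⟩` attached to the tensor `X`. For `Qₙ = AₙAₙᵀ`
its value is the HOOI objective `f(A)`, so it expresses `f` through the projections alone. -/
def tuckerForm (X : (∀ n, ι n) → R) : MultilinearMap R (fun n => Matrix (ι n) (ι n) R) R :=
  ∑ idx, ∑ idx', (X idx * X idx') • (MultilinearMap.mkPiAlgebra R α R).compLinearMap
    fun n => Matrix.entryLinearMap R R (idx n) (idx' n)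

theorem tuckerForm_apply (X : (∀ n, ι n) → R) (Q : ∀ n, Matrix (ι n) (ι n) R) :
    tuckerForm X Q = ∑ idx, ∑ idx', X idx * X idx' * ∏ n, Q n (idx n) (idx' n) := by
  simp [tuckerForm]

theorem map_tuckerForm {S : Type*} [CommRing S] (φ : R →+* S) (X : (∀ n, ι n) → R)
    (Q : ∀ n, Matrix (ι n) (ι n) R) :
    φ (tuckerForm X Q) = tuckerForm (φ ∘ X) fun n => (Q n).map φ := by
  simp [tuckerForm_apply]

theorem tuckerForm_transpose (X : (∀ n, ι n) → R) (Q : ∀ n, Matrix (ι n) (ι n) R) :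
    tuckerForm X (fun n => (Q n)ᵀ) = tuckerForm X Q := by
  simp only [tuckerForm_apply, transpose_apply]
  rw [Finset.sum_comm]
  simp only [mul_comm (X _) (X _)]

variable [∀ n, DecidableEq (ι n)]

/-- The gradient of `tuckerForm X` in its `n`-th argument. It does not depend on `Q n`, and for
`Qₙ = AₙAₙᵀ` it is the matrix `Gₙ(A)Gₙ(A)ᵀ` whose leading eigenspace HOOI computes. -/
def tuckerGrad (X : (∀ n, ι n) → R) (Q : ∀ n, Matrix (ι n) (ι n) R) (n : α) :
    Matrix (ι n) (ι n) R :=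
  of fun i j => tuckerForm X (Function.update Q n (single j i 1))

theorem tuckerForm_update (X : (∀ n, ι n) → R) (Q : ∀ n, Matrix (ι n) (ι n) R) (n : α)
    (M : Matrix (ι n) (ι n) R) :
    tuckerForm X (Function.update Q n M) = trace (tuckerGrad X Q n * M) := by
  have hM : M = ∑ j, ∑ i, M j i • single j i (1 : R) := by
    simpa only [smul_single, smul_eq_mul, mul_one] using matrix_eq_sum_single M
  conv_lhs => rw [hM]
  simp only [MultilinearMap.map_update_sum, MultilinearMap.map_update_smul, trace, diag_apply,
    mul_apply, tuckerGrad, of_apply, smul_eq_mul, mul_comm]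
  exact Finset.sum_comm

theorem tuckerGrad_congr (X : (∀ n, ι n) → R) {Q Q' : ∀ n, Matrix (ι n) (ι n) R} {n : α}
    (h : ∀ m ≠ n, Q m = Q' m) : tuckerGrad X Q n = tuckerGrad X Q' n := by
  ext i j
  refine congrArg (tuckerForm X) (funext fun m => ?_)
  obtain rfl | hm := eq_or_ne m n
  · simp only [Function.update_self]
  · simp only [Function.update_of_ne hm, h m hm]

theorem isSymm_tuckerGrad (X : (∀ n, ι n) → R) {Q : ∀ n, Matrix (ι n) (ι n) R}
    (hQ : ∀ n, (Q n).IsSymm) (n : α) : (tuckerGrad X Q n).IsSymm := by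
  ext i j
  rw [transpose_apply, tuckerGrad, of_apply, of_apply, ← tuckerForm_transpose]
  refine congrArg (tuckerForm X) (funext fun m => ?_)
  obtain rfl | hm := eq_or_ne m n
  · simp only [Function.update_self, transpose_single]
  · simp only [Function.update_of_ne hm, (hQ m).eq]

theorem map_tuckerGrad {S : Type*} [CommRing S] (φ : R →+* S) (X : (∀ n, ι n) → R)
    (Q : ∀ n, Matrix (ι n) (ι n) R) (n : α) :
    (tuckerGrad X Q n).map φ = tuckerGrad (φ ∘ X) (fun n => (Q n).map φ) n := by
  ext i j
  rw [map_apply, tuckerGrad, tuckerGrad, of_apply, of_apply, map_tuckerForm]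
  refine congrArg (tuckerForm _) (funext fun m => ?_)
  obtain rfl | hm := eq_or_ne m n
  · simp only [Function.update_self, map_single, map_one]
  · simp only [Function.update_of_ne hm]

theorem derivation_tuckerForm {k M : Type*} [CommRing k] [Algebra k R] [AddCommGroup M] [Module R M]
    [Module k M] (D : Derivation k R M) {X : (∀ n, ι n) → R} (hX : ∀ idx, D (X idx) = 0)
    (Q : ∀ n, Matrix (ι n) (ι n) R) :
    D (tuckerForm X Q) = ∑ n, ∑ i, ∑ j, tuckerGrad X Q n i j • D (Q n j i) := by
  have hterm (n : α) (idx idx' : ∀ n, ι n) (c : R) :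
      ∑ i, ∑ j, (c * ∏ m, Function.update Q n (single j i 1) m (idx m) (idx' m)) • D (Q n j i) =
        c • (∏ m ∈ Finset.univ.erase n, Q m (idx m) (idx' m)) • D (Q n (idx n) (idx' n)) := by
    simp only [prod_update_single, ite_and, mul_ite, mul_zero, ite_smul, zero_smul,
      Finset.sum_ite_eq', Finset.mem_univ, if_true, mul_smul]
  have hgrad (n : α) : ∑ i, ∑ j, tuckerGrad X Q n i j • D (Q n j i) =
      ∑ idx, ∑ idx', (X idx * X idx') •
        (∏ m ∈ Finset.univ.erase n, Q m (idx m) (idx' m)) • D (Q n (idx n) (idx' n)) := by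
    simp only [← hterm, tuckerGrad, of_apply, tuckerForm_apply, Finset.sum_smul]
    rw [Finset.sum_comm_cycle]
    exact Finset.sum_congr rfl fun idx _ => Finset.sum_comm_cycle
  simp only [hgrad, tuckerForm_apply, map_sum, Derivation.leibniz, hX, smul_zero, add_zero,
    derivation_prod, Finset.smul_sum]
  rw [Finset.sum_comm_cycle]

end TuckerForm

section TangentPart

/-- The off-diagonal part of `Φ` with respect to the splitting `1 = Q + (1 - Q)`. When `Q` is an
orthogonal projection, this is the component of `Φ` tangent to the manifold of projections
at `Q`. -/
def tangentPart {R : Type*} [Ring R] (Q Φ : R) : R :=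
  Q * Φ * (1 - Q) + (1 - Q) * Φ * Q

theorem tangentPart_eq_zero {R : Type*} [Ring R] {Q Φ : R} (hQ : IsIdempotentElem Q)
    (h : Commute Q Φ) : tangentPart Q Φ = 0 := by
  rw [tangentPart, h.eq, mul_assoc, hQ.mul_one_sub_self, mul_assoc, ← h.eq, ← mul_assoc,
    hQ.one_sub_mul_self, mul_zero, zero_mul, add_zero]

theorem map_tangentPart {R S F : Type*} [Ring R] [Ring S] [FunLike F R S] [RingHomClass F R S]
    (φ : F) (Q Φ : R) : φ (tangentPart Q Φ) = tangentPart (φ Q) (φ Φ) := by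
  simp only [tangentPart, map_add, map_mul, map_sub, map_one]

variable {ι R M k : Type*} [Fintype ι] [DecidableEq ι] [CommRing R]

theorem trace_tangentPart_mul {Q E : Matrix ι ι R} (hQ : IsIdempotentElem Q)
    (hE : E = Q * E + E * Q) (Φ : Matrix ι ι R) :
    trace (tangentPart Q Φ * E) = trace (Φ * E) := by
  have hQEQ : Q * E * Q = 0 := by
    have : Q * (Q * E + E * Q) * Q = Q * E * Q + Q * E * Q := by
      simp only [mul_add, add_mul, mul_assoc, hQ.eq, ← mul_assoc Q Q]
    rwa [← hE, left_eq_add] at this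
  calc trace (tangentPart Q Φ * E)
      = trace (Q * (Φ * (1 - Q) * E)) + trace ((1 - Q) * (Φ * Q * E)) := by
        simp only [tangentPart, add_mul, trace_add, mul_assoc]
    _ = trace (Φ * (E * Q - Q * E * Q + (Q * E - Q * E * Q))) := by
        rw [trace_mul_comm, trace_mul_comm (1 - Q), ← trace_add]
        congr 1
        noncomm_ring
    _ = trace (Φ * E) := by rw [hQEQ, sub_zero, sub_zero, add_comm, ← hE]

variable [AddCommGroup M] [Module R M] [CommRing k] [Algebra k R] [Module k M]

theorem sum_tangentPart_smul_derivation (D : Derivation k R M) {Q : Matrix ι ι R}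
    (hQ : IsIdempotentElem Q) (Φ : Matrix ι ι R) :
    ∑ i, ∑ j, tangentPart Q Φ i j • D (Q j i) = ∑ i, ∑ j, Φ i j • D (Q j i) := by
  let : Module Rᵐᵒᵖ M := Module.compHom M ((RingHom.id R).fromOpposite mul_comm)
  have : IsCentralScalar R M := ⟨fun _ _ => rfl⟩
  let Q' : Matrix ι ι (TrivSqZeroExt R M) := Q.map (TrivSqZeroExt.inlHom R M)
  let E : Matrix ι ι (TrivSqZeroExt R M) := Q.map fun q => TrivSqZeroExt.inr (D q)
  -- Over `R ⊕ εM` the entries of `E = ε DQ` are scalars, so `trace_tangentPart_mul` applies to `E`.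
  have hQ' : IsIdempotentElem Q' := hQ.map (TrivSqZeroExt.inlHom R M).mapMatrix
  have hE : E = Q' * E + E * Q' := by
    ext1 i j
    have hij : D (∑ l, Q i l * Q l j) = D (Q i j) := congrArg D (congrFun₂ hQ.eq i j)
    simp only [Matrix.add_apply, mul_apply, E, Q', map_apply, ← hij, map_sum, Derivation.leibniz,
      ← Finset.sum_add_distrib, TrivSqZeroExt.inr_sum, TrivSqZeroExt.inlHom_apply,
      TrivSqZeroExt.inr_add, TrivSqZeroExt.inl_mul_inr, TrivSqZeroExt.inr_mul_inl, op_smul_eq_smul]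
  have hpair (Ψ : Matrix ι ι R) : trace (Ψ.map (TrivSqZeroExt.inlHom R M) * E) =
      TrivSqZeroExt.inr (∑ i, ∑ j, Ψ i j • D (Q j i)) := by
    simp [trace, mul_apply, E, TrivSqZeroExt.inl_mul_inr, TrivSqZeroExt.inr_sum]
  have := trace_tangentPart_mul hQ' hE (Φ.map (TrivSqZeroExt.inlHom R M))
  apply TrivSqZeroExt.inr_injective (R := R)
  rw [← hpair, ← hpair, ← this]
  refine congrArg (fun Ψ => trace (Ψ * E)) ?_
  exact map_tangentPart (TrivSqZeroExt.inlHom R M).mapMatrix Q Φ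

end TangentPart

section FrobeniusNorm
open scoped Matrix.Norms.Frobenius

variable {m n : Type*} [Fintype m] [Fintype n]

theorem frobenius_norm_sq (M : Matrix m n ℝ) : ‖M‖ ^ 2 = ∑ i, ∑ j, M i j ^ 2 := by
  rw [frobenius_norm_def, ← Real.sqrt_eq_rpow, Real.sq_sqrt (by positivity)]
  simp only [Real.rpow_two, Real.norm_eq_abs, sq_abs]

theorem frobenius_norm_sq_eq_trace (M : Matrix m n ℝ) : ‖M‖ ^ 2 = trace (Mᵀ * M) := by
  rw [frobenius_norm_sq, Finset.sum_comm]
  simp only [trace, diag_apply, mul_apply, transpose_apply, sq]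

theorem abs_entry_le_frobenius_norm (M : Matrix m n ℝ) (i : m) (j : n) : |M i j| ≤ ‖M‖ := by
  rw [← abs_norm M, ← sq_le_sq, frobenius_norm_sq]
  calc M i j ^ 2 ≤ ∑ j, M i j ^ 2 :=
        Finset.single_le_sum (f := fun j => M i j ^ 2) (fun _ _ => sq_nonneg _) (Finset.mem_univ j)
    _ ≤ ∑ i, ∑ j, M i j ^ 2 :=
        Finset.single_le_sum (f := fun i => ∑ j, M i j ^ 2)
          (fun _ _ => Finset.sum_nonneg fun _ _ => sq_nonneg _) (Finset.mem_univ i)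

theorem abs_entry_le_one {Q : Matrix m m ℝ} (hQ : IsStarProjection Q) (i j : m) :
    |Q i j| ≤ 1 := by
  have hdiag (i j : m) : Q i j ^ 2 ≤ Q i i := by
    have hsymm (l : m) : Q l i = Q i l := congrFun₂ hQ.isSelfAdjoint.star_eq i l
    have : ∑ l, Q i l ^ 2 = Q i i := by
      simpa only [mul_apply, hsymm, sq] using congrFun₂ hQ.isIdempotentElem.eq i i
    rw [← this]
    exact Finset.single_le_sum (f := fun l => Q i l ^ 2) (fun _ _ => sq_nonneg _)
      (Finset.mem_univ j)
  refine abs_le_of_sq_le_sq ?_ zero_le_one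
  nlinarith [hdiag i j, hdiag i i]

end FrobeniusNorm

section LojasiewiczTucker
open KaehlerDifferential
open scoped Matrix.Norms.Frobenius

variable {α : Type*} [Fintype α] [DecidableEq α] {ι : α → Type*} [∀ n, Fintype (ι n)]
  [∀ n, DecidableEq (ι n)]

theorem exists_smul_eq_D_sub_tuckerForm {k B : Type*} [CommRing k] [CommRing B] [Algebra k B]
    (X : (∀ n, ι n) → k) (t₀ : k) {Q H : ∀ n, Matrix (ι n) (ι n) B}
    (hQ : ∀ n, IsIdempotentElem (Q n))
    (hH : ∀ n, tangentPart (Q n) (tuckerGrad (algebraMap k B ∘ X) Q n) =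
      (algebraMap k B t₀ - tuckerForm (algebraMap k B ∘ X) Q) • H n) :
    ∃ ω : Ω[B⁄k], (algebraMap k B t₀ - tuckerForm (algebraMap k B ∘ X) Q) • ω =
      D k B (algebraMap k B t₀ - tuckerForm (algebraMap k B ∘ X) Q) := by
  refine ⟨-∑ n, ∑ i, ∑ j, H n i j • D k B (Q n j i), ?_⟩
  have hX (idx : ∀ n, ι n) : D k B ((algebraMap k B ∘ X) idx) = 0 := Derivation.map_algebraMap _ _
  rw [map_sub, Derivation.map_algebraMap, zero_sub, derivation_tuckerForm _ hX, smul_neg,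
    Finset.smul_sum]
  refine congrArg Neg.neg (Finset.sum_congr rfl fun n _ => ?_)
  rw [← sum_tangentPart_smul_derivation _ (hQ n) (tuckerGrad _ Q n), hH]
  simp only [Finset.smul_sum, smul_smul, Matrix.smul_apply, smul_eq_mul]

theorem exists_mem_subalgebra_smul_eq_D {V : Type*} (B : Subalgebra ℝ (V → ℝ))
    (X : (∀ n, ι n) → ℝ) (t₀ : ℝ) {Q H : V → ∀ n, Matrix (ι n) (ι n) ℝ}
    (hQB : ∀ n i j, (fun v => Q v n i j) ∈ B) (hHB : ∀ n i j, (fun v => H v n i j) ∈ B)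
    (hQ : ∀ v n, IsIdempotentElem (Q v n))
    (hH : ∀ v n, tangentPart (Q v n) (tuckerGrad X (Q v) n) =
      (t₀ - tuckerForm X (Q v)) • H v n) :
    ∃ f : B, (∀ v, f.1 v = t₀ - tuckerForm X (Q v)) ∧ ∃ ω : Ω[B⁄ℝ], f • ω = D ℝ B f := by
  let ev (v : V) : B →ₐ[ℝ] ℝ := (Pi.evalAlgHom ℝ (fun _ : V => ℝ) v).comp B.val
  let XB : (∀ n, ι n) → B := algebraMap ℝ B ∘ X
  let QB (n : α) : Matrix (ι n) (ι n) B := of fun i j => ⟨_, hQB n i j⟩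
  let HB (n : α) : Matrix (ι n) (ι n) B := of fun i j => ⟨_, hHB n i j⟩
  have hmat {n : α} {M M' : Matrix (ι n) (ι n) B}
      (h : ∀ v, (ev v).mapMatrix M = (ev v).mapMatrix M') : M = M' :=
    ext fun i j => Subtype.ext (funext fun v => congrFun₂ (h v) i j)
  have hX (v : V) : ev v ∘ XB = X := funext fun idx => (ev v).commutes _
  have hf (v : V) : ev v (algebraMap ℝ B t₀ - tuckerForm XB QB) = t₀ - tuckerForm X (Q v) := by
    rw [map_sub, (ev v).commutes]
    exact congrArg _ ((map_tuckerForm (ev v : B →+* ℝ) XB QB).trans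
      (congrArg (tuckerForm · (Q v)) (hX v)))
  have hgrad (v : V) (n : α) : (ev v).mapMatrix (tuckerGrad XB QB n) = tuckerGrad X (Q v) n :=
    (map_tuckerGrad (ev v : B →+* ℝ) XB QB n).trans (congrArg (tuckerGrad · (Q v) n) (hX v))
  refine ⟨_, hf, exists_smul_eq_D_sub_tuckerForm X t₀ (Q := QB) (H := HB)
    (fun n => hmat fun v => ?_) (fun n => hmat fun v => ?_)⟩
  · rw [map_mul]
    exact hQ v n
  · rw [map_tangentPart, hgrad]
    refine (hH v n).trans (ext fun i j => ?_)
    exact (congrArg (· * H v n i j) (hf v).symm).trans (map_mul (ev v) _ (HB n i j)).symm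

theorem exists_one_le_mul_sub_tuckerForm (X : (∀ n, ι n) → ℝ) (t₀ : ℝ) :
    ∃ C : ℝ, 0 ≤ C ∧ ∃ N : ℕ, ∀ Q, (∀ n, IsStarProjection (Q n)) → t₀ - tuckerForm X Q ≠ 0 →
      1 ≤ C * |t₀ - tuckerForm X Q| *
        max 1 (‖fun n => tangentPart (Q n) (tuckerGrad X Q n)‖ / |t₀ - tuckerForm X Q|) ^ N := by
  let V := {Q : ∀ n, Matrix (ι n) (ι n) ℝ //
    (∀ n, IsStarProjection (Q n)) ∧ t₀ - tuckerForm X Q ≠ 0}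
  let H (v : V) (n : α) : Matrix (ι n) (ι n) ℝ :=
    (t₀ - tuckerForm X v.1)⁻¹ • tangentPart (v.1 n) (tuckerGrad X v.1 n)
  let y (a : (Σ n, ι n × ι n) ⊕ (Σ n, ι n × ι n)) (v : V) : ℝ :=
    a.elim (fun p => v.1 p.1 p.2.1 p.2.2) (fun p => H v p.1 p.2.1 p.2.2)
  have hy (a) (v : V) : |y a v| ≤
      max 1 (‖fun n => tangentPart (v.1 n) (tuckerGrad X v.1 n)‖ / |t₀ - tuckerForm X v.1|) := by
    obtain ⟨n, i, j⟩ | ⟨n, i, j⟩ := a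
    · exact (abs_entry_le_one (v.2.1 n) i j).trans (le_max_left _ _)
    · refine le_trans ?_ (le_max_right _ _)
      simp only [y, H, Sum.elim_inr, Matrix.smul_apply, smul_eq_mul, abs_mul, abs_inv]
      rw [inv_mul_eq_div]
      gcongr
      exact (abs_entry_le_frobenius_norm _ i j).trans
        (norm_le_pi_norm (fun n => tangentPart (v.1 n) (tuckerGrad X v.1 n)) n)
  obtain ⟨f, hf, ω, hω⟩ := exists_mem_subalgebra_smul_eq_D (Algebra.adjoin ℝ (Set.range y)) X t₀
    (Q := fun v => v.1) (H := H) (fun n i j => Algebra.subset_adjoin ⟨.inl ⟨n, i, j⟩, rfl⟩)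
    (fun n i j => Algebra.subset_adjoin ⟨.inr ⟨n, i, j⟩, rfl⟩)
    (fun v n => (v.2.1 n).isIdempotentElem) (fun v n => (smul_inv_smul₀ v.2.2 _).symm)
  obtain ⟨C, hC, N, hCN⟩ := exists_one_le_mul_pow_of_smul_eq_D (fun _ => le_max_left _ _) hy
    (fun v => (hf v).trans_ne v.2.2) hω
  simp only [hf] at hCN
  exact ⟨C, hC, N, fun Q hQ hne => hCN ⟨Q, hQ, hne⟩⟩

theorem exists_mul_rpow_le_norm_tangentPart (X : (∀ n, ι n) → ℝ) (t₀ : ℝ) :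
    ∃ θ ∈ Set.Ioo (0 : ℝ) 1, ∃ κ > 0, ∃ ε > 0, ∀ Q, (∀ n, IsStarProjection (Q n)) →
      0 < t₀ - tuckerForm X Q → t₀ - tuckerForm X Q ≤ ε →
        κ * (t₀ - tuckerForm X Q) ^ θ ≤ ‖fun n => tangentPart (Q n) (tuckerGrad X Q n)‖ := by
  obtain ⟨C, hC, N, hCN⟩ := exists_one_le_mul_sub_tuckerForm X t₀
  obtain ⟨θ, hθ, κ, hκ, ε, hε, h⟩ := exists_mul_rpow_le_of_one_le_mul_max_pow hC N
  refine ⟨θ, hθ, κ, hκ, ε, hε, fun Q hQ hpos hle => h _ _ hpos hle (norm_nonneg _) ?_⟩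
  simpa only [abs_of_pos hpos] using hCN Q hQ hpos.ne'

end LojasiewiczTucker

section Unfolding

theorem sum_sum_mul_sum_eq {α R : Type*} [Fintype α] [DecidableEq α] [CommRing R] {ι κ : α → Type*}
    [∀ m, Fintype (ι m)] [∀ m, Fintype (κ m)] (A : ∀ m, Matrix (ι m) (κ m) R)
    (x y : (∀ m, ι m) → R) :
    ∑ c : ∀ m, κ m, (∑ idx, x idx * ∏ m, A m (idx m) (c m)) *
        ∑ idx, y idx * ∏ m, A m (idx m) (c m) =
      ∑ idx, ∑ idx', x idx * y idx' * ∏ m, (A m * (A m)ᵀ) (idx m) (idx' m) := by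
  simp only [Finset.sum_mul_sum]
  rw [← Finset.sum_comm_cycle]
  simp only [mul_mul_mul_comm, ← Finset.mul_sum, ← Finset.prod_mul_distrib, mul_apply,
    transpose_apply, Fintype.prod_sum]

variable {N : ℕ} {I r : Fin N → ℕ}

/-- The orthogonal projections onto the column spaces of a feasible tuple. -/
def projTuple (A : ∀ n, Matrix (Fin (I n)) (Fin (r n)) ℝ) (n : Fin N) :
    Matrix (Fin (I n)) (Fin (I n)) ℝ :=
  A n * (A n)ᵀ

theorem fval_eq_tuckerForm (X : (∀ n, Fin (I n)) → ℝ)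
    (A : ∀ n, Matrix (Fin (I n)) (Fin (r n)) ℝ) : fval X A = tuckerForm X (projTuple A) := by
  simp only [fval, sq, tuckerForm_apply, projTuple, sum_sum_mul_sum_eq]

theorem tuckerGrad_apply {α R : Type*} [Fintype α] [DecidableEq α] [CommRing R] {ι : α → Type*}
    [∀ m, Fintype (ι m)] [∀ n, DecidableEq (ι n)] (X : (∀ n, ι n) → R)
    (Q : ∀ n, Matrix (ι n) (ι n) R) (n : α) (i j : ι n) :
    tuckerGrad X Q n i j = ∑ idx : ∀ m : {m // m ≠ n}, ι m, ∑ idx' : ∀ m : {m // m ≠ n}, ι m,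
      X ((Equiv.piSplitAt n ι).symm (j, idx)) * X ((Equiv.piSplitAt n ι).symm (i, idx')) *
        ∏ m : {m // m ≠ n}, Q m (idx m) (idx' m) := by
  have herase (idx idx' : ∀ n, ι n) :
      ∏ m ∈ Finset.univ.erase n, Q m (idx m) (idx' m) =
        ∏ m : {m // m ≠ n}, Q m (idx m) (idx' m) :=
    Finset.prod_subtype _ (by simp) _
  rw [tuckerGrad, of_apply, tuckerForm_apply]
  simp only [prod_update_single, herase]
  rw [← (Equiv.piSplitAt n ι).symm.sum_comp, Fintype.sum_prod_type]
  conv_lhs =>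
    enter [2, a, 2, idx]
    rw [← (Equiv.piSplitAt n ι).symm.sum_comp, Fintype.sum_prod_type]
  have hself (m : {m // m ≠ n}) : ¬ (m : α) = n := m.2
  simp [ite_and, hself]

theorem Gmat_mul_transpose (X : (∀ n, Fin (I n)) → ℝ)
    (A : ∀ n, Matrix (Fin (I n)) (Fin (r n)) ℝ) (n : Fin N) :
    Gmat X A n * (Gmat X A n)ᵀ = tuckerGrad X (projTuple A) n := by
  have hins (j : Fin (I n)) (idx : ∀ m : {m // m ≠ n}, Fin (I m)) :
      (fun i => if h : i = n then Fin.cast (by rw [h]) j else idx ⟨i, h⟩) =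
        (Equiv.piSplitAt n fun n => Fin (I n)).symm (j, idx) := by
    funext i
    obtain rfl | hi := eq_or_ne i n <;> simp [*]
  ext i j
  rw [tuckerGrad_apply]
  simp only [projTuple]
  rw [← sum_sum_mul_sum_eq (fun m : {m // m ≠ n} => A m)]
  simp only [mul_apply, Gmat, hins, transpose_apply]
  exact Finset.sum_congr rfl fun _ _ => mul_comm _ _

theorem froSq_transpose_mul {m n l : Type*} [Fintype m] [Fintype n] [Fintype l]
    (B : Matrix m n ℝ) (G : Matrix m l ℝ) : froSq (Bᵀ * G) = trace (G * Gᵀ * (B * Bᵀ)) := by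
  rw [froSq, ← frobenius_norm_sq, frobenius_norm_sq_eq_trace, transpose_mul, transpose_transpose,
    Matrix.mul_assoc, trace_mul_comm, ← Matrix.mul_assoc, Matrix.mul_assoc, trace_mul_comm]

end Unfolding

section TuckerForm
open scoped Matrix.Norms.Frobenius

theorem tuckerForm_sub_eq_sum_trace {α R : Type*} [Fintype α] [LinearOrder α] {ι : α → Type*}
    [∀ n, Fintype (ι n)] [∀ n, DecidableEq (ι n)] [CommRing R] (X : (∀ n, ι n) → R)
    (Q Q' : ∀ n, Matrix (ι n) (ι n) R) :
    tuckerForm X Q' - tuckerForm X Q =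
      ∑ n, trace (tuckerGrad X (fun i => if i < n then Q' i else Q i) n * (Q' n - Q n)) := by
  have htele := (tuckerForm X).map_sub_map_piecewise Q' Q Finset.univ
  rw [Finset.piecewise_univ] at htele
  rw [htele]
  refine Finset.sum_congr rfl fun n _ => ?_
  rw [← tuckerForm_update]
  refine congrArg (tuckerForm X) (funext fun m => ?_)
  obtain rfl | hm := eq_or_ne m n
  · simp
  · simp [Function.update_of_ne hm, hm.symm]

variable {α : Type*} [Fintype α] [DecidableEq α] {ι : α → Type*} [∀ n, Fintype (ι n)]

theorem contDiff_tuckerForm (X : (∀ n, ι n) → ℝ) {p : WithTop ℕ∞} :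
    ContDiff ℝ p fun Q : ∀ n, Matrix (ι n) (ι n) ℝ => tuckerForm X Q := by
  simp only [tuckerForm_apply]
  refine ContDiff.sum fun idx _ => ContDiff.sum fun idx' _ => contDiff_const.mul <|
    contDiff_prod fun n _ => ?_
  exact (entryLinearMap ℝ ℝ (idx n) (idx' n)).toContinuousLinearMap.contDiff.comp
    (contDiff_pi.mp contDiff_fun_id n)

variable [∀ n, DecidableEq (ι n)]

theorem contDiff_tuckerGrad (X : (∀ n, ι n) → ℝ) (n : α) {p : WithTop ℕ∞} :
    ContDiff ℝ p fun Q : ∀ n, Matrix (ι n) (ι n) ℝ => tuckerGrad X Q n := by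
  have hentry (i j : ι n) : ContDiff ℝ p fun Q : ∀ n, Matrix (ι n) (ι n) ℝ =>
      tuckerGrad X Q n i j := by
    refine (contDiff_tuckerForm X).comp (contDiff_pi.mpr fun m => ?_)
    obtain rfl | hm := eq_or_ne m n
    · simpa only [Function.update_self] using contDiff_const
    · simpa only [Function.update_of_ne hm] using contDiff_pi.mp contDiff_fun_id m
  have hsum (Q : ∀ n, Matrix (ι n) (ι n) ℝ) : tuckerGrad X Q n =
      ∑ i, ∑ j, tuckerGrad X Q n i j • single i j 1 := by
    simpa only [smul_single, smul_eq_mul, mul_one] using matrix_eq_sum_single (tuckerGrad X Q n)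
  rw [funext hsum]
  exact .sum fun i _ => .sum fun j _ => (hentry i j).smul contDiff_const

theorem contDiff_tangentPart_tuckerGrad (X : (∀ n, ι n) → ℝ) (n : α) {p : WithTop ℕ∞} :
    ContDiff ℝ p fun Q : ∀ n, Matrix (ι n) (ι n) ℝ =>
      tangentPart (Q n) (tuckerGrad X Q n) := by
  have hΦ := contDiff_tuckerGrad X n (p := p)
  have hQ : ContDiff ℝ p fun Q : ∀ n, Matrix (ι n) (ι n) ℝ => Q n :=
    contDiff_pi.mp contDiff_fun_id n
  exact ((hQ.mul hΦ).mul (contDiff_const.sub hQ)).add (((contDiff_const.sub hQ).mul hΦ).mul hQ)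

end TuckerForm

section SpectralGap
open scoped Matrix.Norms.Frobenius Topology

theorem abs_trace_mul_le_frobenius_norm_mul {m n : Type*} [Fintype m] [Fintype n]
    (A : Matrix m n ℝ) (B : Matrix n m ℝ) : |trace (A * B)| ≤ ‖A‖ * ‖B‖ := by
  refine abs_le_of_sq_le_sq ?_ (by positivity)
  rw [mul_pow, ← frobenius_norm_transpose B, frobenius_norm_sq, frobenius_norm_sq]
  simp only [trace, diag_apply, mul_apply, ← Fintype.sum_prod_type', transpose_apply]
  exact Finset.sum_mul_sq_le_sq_mul_sq _ _ _

variable {n : Type*} [Fintype n]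

theorem trace_mul_nonneg_of_posSemidef {N Q : Matrix n n ℝ} (hN : N.PosSemidef)
    (hQ : IsStarProjection Q) : 0 ≤ trace (N * Q) := by
  have := (hN.conjTranspose_mul_mul_same Q).trace_nonneg
  rwa [trace_mul_cycle, ← star_eq_conjTranspose, hQ.isSelfAdjoint.star_eq, hQ.isIdempotentElem.eq,
    trace_mul_comm] at this

theorem posSemidef_smul_one_add [DecidableEq n] {E : Matrix n n ℝ} (hE : E.IsHermitian) {η : ℝ}
    (h : ‖E‖ ≤ η) :
    (η • 1 + E).PosSemidef := by
  refine .of_dotProduct_mulVec_nonneg ((isHermitian_one.smul (.all η)).add hE) fun x => ?_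
  have hxx : 0 ≤ x ⬝ᵥ x := dotProduct_self_star_nonneg x
  have hx : ‖vecMulVec x x‖ = x ⬝ᵥ x := by
    rw [← sq_eq_sq₀ (norm_nonneg _) hxx, frobenius_norm_sq_eq_trace, transpose_vecMulVec,
      vecMulVec_mul_vecMulVec, trace_vecMulVec, dotProduct_smul, smul_eq_mul, sq]
  have hEx := neg_le_of_abs_le (abs_trace_mul_le_frobenius_norm_mul E (vecMulVec x x))
  rw [mul_vecMulVec, trace_vecMulVec, hx, dotProduct_comm] at hEx
  rw [star_trivial, add_mulVec, dotProduct_add, smul_mulVec, one_mulVec, dotProduct_smul,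
    smul_eq_mul, dotProduct_comm x (E *ᵥ x)]
  linarith [mul_le_mul_of_nonneg_right h hxx]

theorem eventually_posSemidef_mul_mul_sub_smul {M P : Matrix n n ℝ} {a a' : ℝ}
    (h : (P * M * P - a • P).PosSemidef) (ha : a' < a) :
    ∀ᶠ p : Matrix n n ℝ × Matrix n n ℝ in 𝓝 (M, P), p.1.IsHermitian → IsStarProjection p.2 →
      (p.2 * p.1 * p.2 - a' • p.2).PosSemidef := by
  have hcont : Continuous fun p : Matrix n n ℝ × Matrix n n ℝ =>
      ‖(p.2 * p.1 * p.2 - a • p.2) - (P * M * P - a • P)‖ := by fun_prop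
  classical
  filter_upwards [hcont.continuousAt.eventually_le_const (u := a - a') (by simpa using ha)]
    with ⟨M', Q⟩ hnear hM' hQ
  have hQstar : Qᴴ = Q := hQ.isSelfAdjoint.star_eq
  have hherm : (Q * M' * Q - a • Q).IsHermitian := by
    simp only [IsHermitian, conjTranspose_sub, conjTranspose_mul, conjTranspose_smul, hM'.eq,
      hQstar, star_trivial, Matrix.mul_assoc]
  have hpos := (h.add (posSemidef_smul_one_add (hherm.sub h.isHermitian)
    hnear)).mul_mul_conjTranspose_same Q
  have hQQ (Y : Matrix n n ℝ) : Q * (Q * Y) = Q * Y := by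
    rw [← Matrix.mul_assoc, hQ.isIdempotentElem.eq]
  convert hpos using 1
  simp only [hQstar, add_sub_cancel, add_left_comm _ ((a - a') • (1 : Matrix n n ℝ)), mul_add,
    add_mul, mul_sub, sub_mul, Matrix.mul_smul, Matrix.smul_mul, Matrix.mul_assoc, hQQ, mul_one,
    hQ.isIdempotentElem.eq]
  module

variable [DecidableEq n]

theorem frobenius_norm_sub_sq {P Q : Matrix n n ℝ} (hP : IsStarProjection P)
    (hQ : IsStarProjection Q) : ‖P - Q‖ ^ 2 = trace (P * (1 - Q)) + trace ((1 - P) * Q) := by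
  rw [frobenius_norm_sq_eq_trace, ← conjTranspose_eq_transpose_of_trivial, ← star_eq_conjTranspose,
    (hP.isSelfAdjoint.sub hQ.isSelfAdjoint).star_eq, ← trace_add]
  have : (P - Q) * (P - Q) = P - P * Q - Q * P + Q := by
    rw [sub_mul, mul_sub, mul_sub, hP.isIdempotentElem.eq, hQ.isIdempotentElem.eq]
    abel
  simp only [this, mul_sub, sub_mul, mul_one, one_mul, trace_add, trace_sub, trace_mul_comm Q P]
  ring

theorem trace_mul_one_sub_eq {P Q : Matrix n n ℝ} (hP : IsStarProjection P)
    (hQ : IsStarProjection Q) (h : trace P = trace Q) :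
    trace (P * (1 - Q)) = ‖P - Q‖ ^ 2 / 2 ∧ trace ((1 - P) * Q) = ‖P - Q‖ ^ 2 / 2 := by
  rw [frobenius_norm_sub_sq hP hQ]
  simp only [mul_sub, sub_mul, mul_one, one_mul, trace_sub, h]
  constructor <;> ring

/-- The range of the projection `P` is an invariant subspace of the symmetric matrix `M` on which
the quadratic form of `M` is at least `a`, while on its orthogonal complement it is at
most `b`. -/
structure HasSpectralGap (M P : Matrix n n ℝ) (a b : ℝ) : Prop where
  commute : Commute P M
  lower : (P * M * P - a • P).PosSemidef
  upper : (b • (1 - P) - (1 - P) * M * (1 - P)).PosSemidef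

namespace HasSpectralGap

variable {M P Q : Matrix n n ℝ} {a b : ℝ}

theorem mul_trace_le (h : HasSpectralGap M P a b) (hP : IsStarProjection P)
    (hQ : IsStarProjection Q) : a * trace (P * Q) ≤ trace (M * P * Q) := by
  have := trace_mul_nonneg_of_posSemidef h.lower hQ
  rwa [h.commute.eq, mul_assoc, hP.isIdempotentElem.eq, sub_mul, trace_sub, smul_mul_assoc,
    trace_smul, smul_eq_mul, sub_nonneg] at this

theorem trace_le_mul (h : HasSpectralGap M P a b) (hP : IsStarProjection P)
    (hQ : IsStarProjection Q) : trace (M * (1 - P) * Q) ≤ b * trace ((1 - P) * Q) := by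
  have := trace_mul_nonneg_of_posSemidef h.upper hQ
  rwa [((Commute.one_left M).sub_left h.commute).eq, mul_assoc, hP.one_sub.isIdempotentElem.eq,
    sub_mul, trace_sub, smul_mul_assoc, trace_smul, smul_eq_mul, sub_nonneg] at this

theorem mul_norm_sub_sq_le (h : HasSpectralGap M P a b) (hP : IsStarProjection P)
    (hQ : IsStarProjection Q) (htr : trace P = trace Q) :
    (a - b) / 2 * ‖P - Q‖ ^ 2 ≤ trace (M * P) - trace (M * Q) := by
  have hl := h.mul_trace_le hP hQ.one_sub
  have hu := h.trace_le_mul hP hQ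
  rw [(trace_mul_one_sub_eq hP hQ htr).1] at hl
  rw [(trace_mul_one_sub_eq hP hQ htr).2] at hu
  simp only [mul_sub, sub_mul, mul_one, trace_sub] at hl hu
  linarith

theorem norm_sub_le (h : HasSpectralGap M P a b) (hab : b < a) (hP : IsStarProjection P)
    (hQ : IsStarProjection Q) (htr : trace P = trace Q) {M' : Matrix n n ℝ}
    (hmax : trace (M' * P) ≤ trace (M' * Q)) : ‖P - Q‖ ≤ 2 / (a - b) * ‖M - M'‖ := by
  have hgrowth := h.mul_norm_sub_sq_le hP hQ htr
  have hcs := le_of_abs_le (abs_trace_mul_le_frobenius_norm_mul (M - M') (P - Q))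
  simp only [mul_sub, sub_mul, trace_sub] at hcs
  have hgap : 0 < (a - b) / 2 := by linarith
  rw [← inv_div, inv_mul_eq_div, le_div_iff₀' hgap]
  by_contra! hlt
  have hpos : 0 < ‖P - Q‖ := (mul_pos_iff_of_pos_left hgap).mp ((norm_nonneg _).trans_lt hlt)
  nlinarith

theorem eventually (h : HasSpectralGap M P a b) {a' b' : ℝ} (ha : a' < a) (hb : b < b') :
    ∀ᶠ p : Matrix n n ℝ × Matrix n n ℝ in 𝓝 (M, P), p.1.IsHermitian → IsStarProjection p.2 →
      Commute p.2 p.1 → HasSpectralGap p.1 p.2 a' b' := by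
  have hcont : Continuous fun p : Matrix n n ℝ × Matrix n n ℝ => (-p.1, 1 - p.2) := by fun_prop
  have hupper : ((1 - P) * -M * (1 - P) - -b • (1 - P)).PosSemidef := by
    simpa [sub_eq_add_neg, add_comm] using h.upper
  filter_upwards [eventually_posSemidef_mul_mul_sub_smul h.lower ha,
    hcont.continuousAt.eventually (eventually_posSemidef_mul_mul_sub_smul hupper (neg_lt_neg hb))]
    with p hl hu hM hQ hcomm
  exact ⟨hcomm, hl hM hQ, by simpa [sub_eq_add_neg, add_comm] using hu hM.neg hQ.one_sub⟩

end HasSpectralGap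

end SpectralGap

section StiefelRotation
open NormedSpace
open scoped Matrix.Norms.Frobenius Topology

theorem trace_commutator_mul {n R : Type*} [Fintype n] [CommRing R] (A B C : Matrix n n R) :
    trace ((A * B - B * A) * C) = trace (A * (B * C - C * B)) := by
  simp only [sub_mul, mul_sub, trace_sub, Matrix.mul_assoc, trace_mul_comm B]

theorem isStarProjection_mul_transpose {m n : Type*} [Fintype m] [Fintype n] [DecidableEq m]
    {B : Matrix n m ℝ} (hB : Bᵀ * B = 1) : IsStarProjection (B * Bᵀ) where
  isIdempotentElem := by
    rw [IsIdempotentElem, Matrix.mul_assoc, ← Matrix.mul_assoc Bᵀ, hB, Matrix.one_mul]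
  isSelfAdjoint := isHermitian_mul_conjTranspose_self B

variable {n : Type*} [Fintype n]

theorem hasDerivAt_trace_mul_exp_conj [DecidableEq n] (M Q S : Matrix n n ℝ) (t : ℝ) :
    HasDerivAt (fun t : ℝ => trace (M * (exp (t • S) * Q * exp (t • -S))))
      (trace ((M * S - S * M) * (exp (t • S) * Q * exp (t • -S)))) t := by
  have hconj : HasDerivAt (fun t : ℝ => exp (t • S) * Q * exp (t • -S))
      (S * exp (t • S) * Q * exp (t • -S) + exp (t • S) * Q * (exp (t • -S) * -S)) t :=
    ((hasDerivAt_exp_smul_const' S t).mul_const Q).mul (hasDerivAt_exp_smul_const (-S) t)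
  refine (((traceLinearMap n ℝ ℝ).comp
    (LinearMap.mulLeft ℝ M)).toContinuousLinearMap.hasFDerivAt.comp_hasDerivAt t
      hconj).congr_deriv ?_
  rw [trace_commutator_mul]
  simp only [Matrix.mul_assoc, mul_neg, ← sub_eq_add_neg]
  rfl

theorem deriv_deriv_nonpos_of_isLocalMax {f : ℝ → ℝ} {x : ℝ} (hf : ContinuousAt f x)
    (h : IsLocalMax f x) : deriv (deriv f) x ≤ 0 := by
  by_contra! hpos
  have hconst : f =ᶠ[𝓝 x] fun _ => f x :=
    h.and (isLocalMin_of_deriv_deriv_pos hpos h.deriv_eq_zero hf) |>.mono fun _ hy =>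
      le_antisymm hy.1 hy.2
  have := hconst.deriv.deriv_eq
  rw [deriv_const', deriv_const] at this
  exact hpos.ne' this

variable {m : Type*} [Fintype m] [DecidableEq m] {B : Matrix n m ℝ} {M S : Matrix n n ℝ}

theorem isLocalMax_trace_mul_exp_conj [DecidableEq n]
    (h : IsLocalMaxOn (fun B => trace (M * (B * Bᵀ))) {B : Matrix n m ℝ | Bᵀ * B = 1} B)
    (hB : Bᵀ * B = 1) (hS : Sᵀ = -S) :
    IsLocalMax (fun t : ℝ => trace (M * (exp (t • S) * (B * Bᵀ) * exp (t • -S)))) 0 := by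
  have hexp (t : ℝ) : exp (t • -S) = (exp (t • S))ᵀ := by
    rw [← exp_transpose, transpose_smul, hS]
  have horth (t : ℝ) : (exp (t • S) * B)ᵀ * (exp (t • S) * B) = 1 := by
    have hcomm : Commute (t • -S) (t • S) := ((Commute.refl S).neg_left.smul_left t).smul_right t
    rw [transpose_mul, Matrix.mul_assoc, ← Matrix.mul_assoc _ _ B, ← hexp,
      ← Matrix.exp_add_of_commute _ _ hcomm, smul_neg, neg_add_cancel, exp_zero, Matrix.one_mul, hB]
  have hcont : Tendsto (fun t : ℝ => exp (t • S) * B) (𝓝 0)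
      (𝓝[{B : Matrix n m ℝ | Bᵀ * B = 1}] B) := by
    refine tendsto_nhdsWithin_iff.mpr ⟨?_, .of_forall horth⟩
    have hexp : Continuous fun t : ℝ => exp (t • S) := exp_continuous.comp (by fun_prop)
    simpa using (hexp.matrix_mul continuous_const).tendsto (0 : ℝ)
  filter_upwards [hcont.eventually h] with t ht
  simpa [-smul_neg, hexp, transpose_mul, Matrix.mul_assoc] using ht

/-- Test the curve generated by `S = [BBᵀ, M]`. -/
theorem commute_of_isLocalMaxOn_trace (hM : M.IsHermitian)
    (h : IsLocalMaxOn (fun B => trace (M * (B * Bᵀ))) {B : Matrix n m ℝ | Bᵀ * B = 1} B)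
    (hB : Bᵀ * B = 1) : Commute (B * Bᵀ) M := by
  classical
  set Q := B * Bᵀ
  have hQ : Qᵀ = Q := (isStarProjection_mul_transpose hB).isSelfAdjoint.star_eq
  have hM : Mᵀ = M := hM
  have hskew : (Q * M - M * Q)ᵀ = -(Q * M - M * Q) := by
    rw [transpose_sub, transpose_mul, transpose_mul M, hQ, hM, neg_sub]
  have hzero := (isLocalMax_trace_mul_exp_conj h hB hskew).hasDerivAt_eq_zero
    (hasDerivAt_trace_mul_exp_conj M Q _ 0)
  rw [trace_commutator_mul, zero_smul, zero_smul, exp_zero, one_mul, mul_one, trace_mul_comm M,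
    trace_commutator_mul, trace_mul_comm] at hzero
  have hnorm : ‖Q * M - M * Q‖ ^ 2 = 0 := by
    rw [frobenius_norm_sq_eq_trace, hskew, neg_mul, trace_neg, neg_eq_zero]
    exact hzero
  exact sub_eq_zero.mp (norm_eq_zero.mp (pow_eq_zero_iff two_ne_zero |>.mp hnorm))

theorem trace_mul_transpose_le_of_isLocalMaxOn_trace
    (h : IsLocalMaxOn (fun B => trace (M * (B * Bᵀ))) {B : Matrix n m ℝ | Bᵀ * B = 1} B)
    (hB : Bᵀ * B = 1) {K : Matrix n n ℝ} (hKQ : K * (B * Bᵀ) = K) (hQK : B * Bᵀ * K = 0) :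
    trace (M * (K * Kᵀ)) ≤ trace (M * (Kᵀ * K)) := by
  classical
  set Q := B * Bᵀ
  have hQ : Qᵀ = Q := (isStarProjection_mul_transpose hB).isSelfAdjoint.star_eq
  have hskew : (K - Kᵀ)ᵀ = -(K - Kᵀ) := by rw [transpose_sub, transpose_transpose, neg_sub]
  have hderiv (M : Matrix n n ℝ) := hasDerivAt_trace_mul_exp_conj M Q (K - Kᵀ)
  have hnonpos := deriv_deriv_nonpos_of_isLocalMax (hderiv M 0).continuousAt
    (isLocalMax_trace_mul_exp_conj h hB hskew)
  rw [funext fun t => (hderiv M t).deriv, (hderiv _ 0).deriv] at hnonpos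
  have hQK' : Kᵀ * Q = 0 := by rw [← hQ, ← transpose_mul, hQK, transpose_zero]
  have hKQ' : Q * Kᵀ = Kᵀ := by rw [← hQ, ← transpose_mul, hKQ]
  have hKK : K * K = 0 := by rw [← hKQ, Matrix.mul_assoc, hKQ, hQK, mul_zero]
  have hKK' : Kᵀ * Kᵀ = 0 := by rw [← transpose_mul, hKK, transpose_zero]
  rw [zero_smul, zero_smul, exp_zero, one_mul, mul_one, trace_commutator_mul,
    trace_commutator_mul] at hnonpos
  have hbracket : (K - Kᵀ) * ((K - Kᵀ) * Q - Q * (K - Kᵀ)) -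
      ((K - Kᵀ) * Q - Q * (K - Kᵀ)) * (K - Kᵀ) = (2 : ℝ) • (K * Kᵀ) - (2 : ℝ) • (Kᵀ * K) := by
    simp only [mul_sub, sub_mul, hKQ, hQK, hKQ', hQK', hKK, hKK', mul_zero, zero_mul]
    module
  rw [hbracket, mul_sub, trace_sub, Matrix.mul_smul, Matrix.mul_smul, trace_smul, trace_smul,
    smul_eq_mul, smul_eq_mul] at hnonpos
  linarith

end StiefelRotation

section LocalMaximizer
open scoped Matrix.Norms.Frobenius

variable {n : Type*} [Fintype n]

theorem sum_single_mul_mul_single {R : Type*} [CommSemiring R] [DecidableEq n]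
    (N : Matrix n n R) :
    ∑ i : n, ∑ j, single i j 1 * N * single j i 1 = trace N • (1 : Matrix n n R) := by
  simp only [single_mul_mul_single, one_mul, mul_one, trace, diag_apply, Finset.sum_smul]
  rw [Finset.sum_comm]
  refine Finset.sum_congr rfl fun j _ => ?_
  rw [← diagonal_one, ← sum_single_eq_diagonal, Finset.smul_sum]
  simp only [smul_single, smul_eq_mul, mul_one]

theorem sum_trace_mul_mul_transpose_single {R : Type*} [CommRing R] [DecidableEq n]
    (M U V : Matrix n n R) :
    ∑ i, ∑ j, trace (M * (U * single i j 1 * V * (U * single i j 1 * V)ᵀ)) =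
      trace (V * Vᵀ) * trace (M * (U * Uᵀ)) := by
  have hterm (i j : n) : M * (U * single i j 1 * V * (U * single i j 1 * V)ᵀ) =
      M * U * (single i j 1 * (V * Vᵀ) * single j i 1) * Uᵀ := by
    simp only [transpose_mul, transpose_single, Matrix.mul_assoc]
  simp_rw [hterm]
  simp only [← trace_sum, ← Finset.mul_sum, ← Finset.sum_mul, sum_single_mul_mul_single]
  rw [Matrix.mul_smul, Matrix.smul_mul, Matrix.mul_one, trace_smul, smul_eq_mul, Matrix.mul_assoc]

theorem trace_mul_mul_transpose_of_commute {M R S : Matrix n n ℝ} (hR : IsStarProjection R)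
    (hS : IsStarProjection S) (h : Commute S M) :
    trace (M * (S * R * (S * R)ᵀ)) = trace (M * R * S) := by
  have hRt : Rᵀ = R := hR.isSelfAdjoint.star_eq
  have hSt : Sᵀ = S := hS.isSelfAdjoint.star_eq
  calc trace (M * (S * R * (S * R)ᵀ)) = trace (M * S * (R * R) * S) := by
        rw [transpose_mul, hRt, hSt]; simp only [Matrix.mul_assoc]
    _ = trace (M * R * (S * S)) := by
        rw [hR.isIdempotentElem.eq, ← h.eq, Matrix.mul_assoc S, Matrix.mul_assoc, trace_mul_comm,
          Matrix.mul_assoc]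
    _ = trace (M * R * S) := by rw [hS.isIdempotentElem.eq]

variable {m : Type*} [Fintype m] [DecidableEq m] {B : Matrix n m ℝ} {M P : Matrix n n ℝ} {a b : ℝ}

theorem trace_mul_trace_le_of_isLocalMaxOn_trace
    (hmax : IsLocalMaxOn (fun B => trace (M * (B * Bᵀ))) {B : Matrix n m ℝ | Bᵀ * B = 1} B)
    (hB : Bᵀ * B = 1) {U V : Matrix n n ℝ} (hU : B * Bᵀ * U = 0) (hV : B * Bᵀ * V = V) :
    trace (V * Vᵀ) * trace (M * (U * Uᵀ)) ≤ trace (U * Uᵀ) * trace (M * (V * Vᵀ)) := by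
  classical
  have hVt : Vᵀ * (B * Bᵀ) = Vᵀ := by
    simpa only [transpose_mul, transpose_transpose] using congrArg transpose hV
  -- Sum the second-order condition over the test matrices `K = U Eᵢⱼ Vᵀ`.
  have hsum := Finset.sum_le_sum fun i (_ : i ∈ Finset.univ) => Finset.sum_le_sum
    fun j (_ : j ∈ Finset.univ) =>
      trace_mul_transpose_le_of_isLocalMaxOn_trace hmax hB (K := U * single i j 1 * Vᵀ)
        (by rw [Matrix.mul_assoc, hVt])
        (by rw [← Matrix.mul_assoc, ← Matrix.mul_assoc, hU, Matrix.zero_mul, Matrix.zero_mul])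
  have hswap (i j : n) : (U * single i j 1 * Vᵀ)ᵀ * (U * single i j 1 * Vᵀ) =
      V * single j i 1 * Uᵀ * (V * single j i 1 * Uᵀ)ᵀ := by
    simp only [transpose_mul, transpose_transpose, transpose_single, Matrix.mul_assoc]
  simp only [hswap] at hsum
  rwa [sum_trace_mul_mul_transpose_single, Finset.sum_comm, sum_trace_mul_mul_transpose_single,
    transpose_transpose, transpose_transpose, trace_mul_comm Uᵀ, trace_mul_comm Vᵀ] at hsum

theorem HasSpectralGap.eq_of_isLocalMaxOn_trace [DecidableEq n] (h : HasSpectralGap M P a b)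
    (hab : b < a) (hM : M.IsHermitian) (hP : IsStarProjection P) (hB : Bᵀ * B = 1)
    (htr : trace P = trace (B * Bᵀ))
    (hmax : IsLocalMaxOn (fun B => trace (M * (B * Bᵀ))) {B : Matrix n m ℝ | Bᵀ * B = 1} B) :
    B * Bᵀ = P := by
  have hcomm := commute_of_isLocalMaxOn_trace hM hmax hB
  have hQ := isStarProjection_mul_transpose hB
  have hsecond := trace_mul_trace_le_of_isLocalMaxOn_trace hmax hB
    (U := (1 - B * Bᵀ) * P) (V := B * Bᵀ * (1 - P))
    (by rw [← Matrix.mul_assoc, hQ.isIdempotentElem.mul_one_sub_self, Matrix.zero_mul])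
    (by rw [← Matrix.mul_assoc, hQ.isIdempotentElem.eq])
  generalize B * Bᵀ = Q at *
  have hU := trace_mul_mul_transpose_of_commute hP hQ.one_sub (.one_right (1 - Q))
  have hV := trace_mul_mul_transpose_of_commute hP.one_sub hQ (.one_right Q)
  simp only [one_mul] at hU hV
  obtain ⟨hPQ, hQP⟩ := trace_mul_one_sub_eq hP hQ htr
  have hl := h.mul_trace_le hP hQ.one_sub
  have hu := h.trace_le_mul hP hQ
  rw [hU, hV, trace_mul_mul_transpose_of_commute hP.one_sub hQ hcomm,
    trace_mul_mul_transpose_of_commute hP hQ.one_sub ((Commute.one_left M).sub_left hcomm),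
    hPQ, hQP] at hsecond
  rw [hPQ] at hl
  rw [hQP] at hu
  by_contra hne
  have hpos : 0 < ‖P - Q‖ ^ 2 / 2 := by have := sub_ne_zero.mpr (Ne.symm hne); positivity
  have hle := hl.trans ((le_of_mul_le_mul_left hsecond hpos).trans hu)
  exact hab.not_ge (le_of_mul_le_mul_right hle hpos)

end LocalMaximizer

section SingularValueGap

theorem sort_map_comp_equiv_reverse {α ι : Type*} [LinearOrder α] [Fintype ι] {m : ℕ}
    {g : Fin m → α} (hg : Antitone g) (e : ι ≃ Fin m) :
    ((Finset.univ.val.map (g ∘ e)).sort (· ≤ ·)).reverse = List.ofFn g := by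
  refine List.Perm.eq_of_sortedGE (Multiset.pairwise_sort _ _).sortedLE.reverse
    hg.sortedGE_ofFn ?_
  rw [← Multiset.coe_eq_coe, Multiset.coe_reverse, Multiset.sort_eq, ← Multiset.map_map,
    Multiset.map_univ_val_equiv, Fin.univ_val_map]

variable {n : Type*} [Fintype n]

theorem trace_mul_transpose_eq_card {m : Type*} [Fintype m] [DecidableEq m] {B : Matrix n m ℝ}
    (hB : Bᵀ * B = 1) : trace (B * Bᵀ) = Fintype.card m := by
  rw [trace_mul_comm, hB, trace_one]

theorem exists_hasSpectralGap_of_eigenvalues [DecidableEq n] {M : Matrix n n ℝ}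
    (hM : M.IsHermitian) {a b : ℝ} (T : Finset n) (ha : ∀ j ∈ T, a ≤ hM.eigenvalues j)
    (hb : ∀ j ∉ T, hM.eigenvalues j ≤ b) :
    ∃ P : Matrix n n ℝ, IsStarProjection P ∧ trace P = T.card ∧ HasSpectralGap M P a b := by
  set φ := Unitary.conjStarAlgAut ℝ _ hM.eigenvectorUnitary with hφ
  set d : n → ℝ := fun j => if j ∈ T then 1 else 0 with hd
  have hMφ : M = φ (diagonal hM.eigenvalues) := hM.spectral_theorem
  have hpos {c : n → ℝ} (hc : 0 ≤ c) : (φ (diagonal c)).PosSemidef :=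
    (PosSemidef.diagonal hc).mul_mul_conjTranspose_same _
  have hcompl : 1 - φ (diagonal d) = φ (diagonal (1 - d)) := by
    rw [← map_one φ, ← map_sub, ← diagonal_one, diagonal_sub]; rfl
  refine ⟨φ (diagonal d), IsStarProjection.map ⟨?_, ?_⟩ φ, ?_, ?_, ?_, ?_⟩
  · simp [IsIdempotentElem, hd]
  · simp [IsSelfAdjoint, star_eq_conjTranspose]
  · rw [hφ, Unitary.conjStarAlgAut_apply, trace_mul_cycle, Unitary.coe_star_mul_self, one_mul]
    simp [trace, hd]
  · rw [hMφ]
    exact (commute_diagonal _ _).map φ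
  · rw [hMφ, ← map_mul, ← map_mul, ← map_smul, ← map_sub]
    simp only [diagonal_mul_diagonal, ← diagonal_smul, diagonal_sub]
    refine hpos fun j => ?_
    by_cases hj : j ∈ T <;> simp [hd, hj, ha]
  · rw [hcompl, hMφ, ← map_mul, ← map_mul, ← map_smul, ← map_sub]
    simp only [diagonal_mul_diagonal, ← diagonal_smul, diagonal_sub]
    refine hpos fun j => ?_
    by_cases hj : j ∈ T <;> simp [hd, hj, hb]

theorem eigList_eq_ofFn {m : ℕ} {κ : Type*} [Fintype κ] (Y : Matrix (Fin m) κ ℝ) :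
    eigList Y = List.ofFn (isHermitian_mul_conjTranspose_self Y).eigenvalues₀ :=
  sort_map_comp_equiv_reverse (isHermitian_mul_conjTranspose_self Y).eigenvalues₀_antitone
    (Fintype.equivOfCardEq (Fintype.card_fin _)).symm

theorem exists_hasSpectralGap_of_sval_lt {m r : ℕ} {κ : Type*} [Fintype κ]
    (Y : Matrix (Fin m) κ ℝ) (h : sval Y (r + 1) < sval Y r) :
    ∃ a b, b < a ∧ ∃ P : Matrix (Fin m) (Fin m) ℝ,
      IsStarProjection P ∧ trace P = r ∧ HasSpectralGap (Y * Yᵀ) P a b := by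
  set hM := isHermitian_mul_conjTranspose_self Y
  have hlt : (eigList Y).getD r 0 < (eigList Y).getD (r - 1) 0 := by
    contrapose! h
    exact Real.sqrt_le_sqrt h
  have hrm : r ≤ m := by
    by_contra! hmr
    rw [eigList_eq_ofFn, List.getD_eq_default _ _ (by simp; lia),
      List.getD_eq_default _ _ (by simp; lia)] at hlt
    exact lt_irrefl _ hlt
  set e := (Fintype.equivOfCardEq (Fintype.card_fin (Fintype.card (Fin m)))).symm
  set T : Finset (Fin m) := {j | (e j : ℕ) < r} with hT
  have hcard : T.card = r := by
    rw [hT, ← Finset.card_map e.toEmbedding, Finset.map_filter, Finset.map_univ_equiv]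
    simpa [Fin.card_filter_val_lt] using hrm
  have hge (j) (hj : j ∈ T) : (eigList Y).getD (r - 1) 0 ≤ hM.eigenvalues j := by
    have hje : (e j : ℕ) < r := by simpa [hT] using hj
    rw [eigList_eq_ofFn, List.getD_eq_getElem _ _ (by simp; lia), List.getElem_ofFn]
    exact hM.eigenvalues₀_antitone (Nat.le_sub_one_of_lt hje)
  have hle (j) (hj : j ∉ T) : hM.eigenvalues j ≤ (eigList Y).getD r 0 := by
    have hje : r ≤ (e j : ℕ) := by simpa [hT] using hj
    rw [eigList_eq_ofFn, List.getD_eq_getElem _ _ (by simpa using hje.trans_lt (e j).isLt),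
      List.getElem_ofFn]
    exact hM.eigenvalues₀_antitone hje
  refine ⟨_, _, hlt, ?_⟩
  simpa only [hcard, conjTranspose_eq_transpose_of_trivial] using
    exists_hasSpectralGap_of_eigenvalues hM T hge hle

theorem exists_hasSpectralGap_of_isLocalMaxOn_trace {m r : ℕ} {κ : Type*} [Fintype κ]
    {Y : Matrix (Fin m) κ ℝ} (h : sval Y (r + 1) < sval Y r) {B : Matrix (Fin m) (Fin r) ℝ}
    (hB : Bᵀ * B = 1)
    (hmax : IsLocalMaxOn (fun B => trace (Y * Yᵀ * (B * Bᵀ)))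
      {B : Matrix (Fin m) (Fin r) ℝ | Bᵀ * B = 1} B) :
    ∃ a b, b < a ∧ HasSpectralGap (Y * Yᵀ) (B * Bᵀ) a b := by
  obtain ⟨a, b, hab, P, hP, htr, hgap⟩ := exists_hasSpectralGap_of_sval_lt Y h
  have heq : B * Bᵀ = P := hgap.eq_of_isLocalMaxOn_trace hab
    (conjTranspose_eq_transpose_of_trivial Y ▸ isHermitian_mul_conjTranspose_self Y) hP hB
    (by rw [htr, trace_mul_transpose_eq_card hB, Fintype.card_fin]) hmax
  exact ⟨a, b, hab, heq ▸ hgap⟩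

end SingularValueGap

section Grassmannian
open scoped Matrix.Norms.Frobenius Topology

theorem isCompact_setOf_transpose_mul_eq_one (m k : Type*) [Fintype m] [Finite k]
    [DecidableEq k] : IsCompact {B : Matrix m k ℝ | Bᵀ * B = 1} := by
  cases nonempty_fintype k
  refine Metric.isCompact_of_isClosed_isBounded
    (isClosed_eq (by fun_prop) continuous_const) (isBounded_iff_forall_norm_le.mpr
      ⟨√(Fintype.card k), fun B hB => Real.le_sqrt_of_sq_le ?_⟩)
  rw [frobenius_norm_sq_eq_trace, hB, trace_one]

/-- The Grassmannian of `#k`-dimensional subspaces of `ℝ^m`, realised as a set of orthogonal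
projections. It is described through orthonormal bases, because these are the unknowns of HOOI. -/
def grassmannian (m k : Type*) [Fintype k] [Fintype m] [DecidableEq k] : Set (Matrix m m ℝ) :=
  (fun B : Matrix m k ℝ => B * Bᵀ) '' {B | Bᵀ * B = 1}

variable {m k : Type*} [Fintype m] [Fintype k] [DecidableEq k] {P : Matrix m m ℝ}

theorem isCompact_grassmannian : IsCompact (grassmannian m k) :=
  (isCompact_setOf_transpose_mul_eq_one m k).image (by fun_prop)

theorem isStarProjection_of_mem_grassmannian (hP : P ∈ grassmannian m k) : IsStarProjection P := by
  obtain ⟨B, hB, rfl⟩ := hP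
  exact isStarProjection_mul_transpose hB

theorem trace_of_mem_grassmannian (hP : P ∈ grassmannian m k) : trace P = Fintype.card k := by
  obtain ⟨B, hB, rfl⟩ := hP
  exact trace_mul_transpose_eq_card hB

theorem commute_of_isMaxOn_grassmannian {M : Matrix m m ℝ} (hM : M.IsHermitian)
    (hP : P ∈ grassmannian m k) (h : IsMaxOn (fun Q => trace (M * Q)) (grassmannian m k) P) :
    Commute P M := by
  obtain ⟨B, hB, rfl⟩ := hP
  exact commute_of_isLocalMaxOn_trace hM
    (IsMaxOn.localize fun C hC => h (Set.mem_image_of_mem _ hC)) hB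

end Grassmannian

section Sweep
open scoped Matrix.Norms.Frobenius Topology

variable {N : ℕ} {I r : Fin N → ℕ}

theorem projTuple_hyb (A A' : ∀ n, Matrix (Fin (I n)) (Fin (r n)) ℝ) (n : Fin N) :
    projTuple (hyb A A' n) = hyb (projTuple A) (projTuple A') n := by
  funext m
  simp only [projTuple, hyb]
  split_ifs <;> rfl

/-- One sweep of HOOI, in terms of the orthogonal projections onto the column spaces: for each `n`
in turn, `Q n` is replaced by a maximizer `Q' n` of the objective with the other blocks fixed. -/
structure IsSweep (r : Fin N → ℕ) (X : (∀ n, Fin (I n)) → ℝ)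
    (Q Q' : ∀ n, Matrix (Fin (I n)) (Fin (I n)) ℝ) : Prop where
  mem : ∀ n, Q n ∈ grassmannian (Fin (I n)) (Fin (r n))
  mem' : ∀ n, Q' n ∈ grassmannian (Fin (I n)) (Fin (r n))
  isMaxOn : ∀ n, IsMaxOn (fun P => trace (tuckerGrad X (hyb Q Q' n) n * P))
    (grassmannian (Fin (I n)) (Fin (r n))) (Q' n)

theorem isSweep_of_isHOOI {X : (∀ n, Fin (I n)) → ℝ}
    {A : ℕ → ∀ n, Matrix (Fin (I n)) (Fin (r n)) ℝ} (hA : IsHOOI X A) (k : ℕ) :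
    IsSweep r X (projTuple (A k)) (projTuple (A (k + 1))) where
  mem n := ⟨A k n, hA.1 k n, rfl⟩
  mem' n := ⟨A (k + 1) n, hA.1 (k + 1) n, rfl⟩
  isMaxOn n := by
    rintro _ ⟨B, hB, rfl⟩
    have hmax := hA.2 k n B hB
    rwa [Gseq, froSq_transpose_mul, froSq_transpose_mul, Gmat_mul_transpose, projTuple_hyb] at hmax

namespace IsSweep

variable {X : (∀ n, Fin (I n)) → ℝ} {Q Q' : ∀ n, Matrix (Fin (I n)) (Fin (I n)) ℝ}

theorem isHermitian_tuckerGrad (h : IsSweep r X Q Q') (n : Fin N) :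
    (tuckerGrad X (hyb Q Q' n) n).IsHermitian := by
  refine isSymm_tuckerGrad X (fun m => ?_) n
  unfold hyb
  split_ifs
  exacts [(isStarProjection_of_mem_grassmannian (h.mem' m)).isSelfAdjoint,
    (isStarProjection_of_mem_grassmannian (h.mem m)).isSelfAdjoint]

theorem commute (h : IsSweep r X Q Q') (n : Fin N) :
    Commute (Q' n) (tuckerGrad X (hyb Q Q' n) n) :=
  commute_of_isMaxOn_grassmannian (h.isHermitian_tuckerGrad n) (h.mem' n) (h.isMaxOn n)

theorem tangentPart_update_eq_zero (h : IsSweep r X Q Q') (n : Fin N) :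
    tangentPart (Q' n) (tuckerGrad X (Function.update (hyb Q Q' n) n (Q' n)) n) = 0 := by
  rw [tuckerGrad_congr X fun m hm => Function.update_of_ne hm ..]
  exact tangentPart_eq_zero
    (isStarProjection_of_mem_grassmannian (h.mem' n)).isIdempotentElem (h.commute n)

theorem trace_eq (h : IsSweep r X Q Q') (n : Fin N) : trace (Q' n) = trace (Q n) :=
  (trace_of_mem_grassmannian (h.mem' n)).trans (trace_of_mem_grassmannian (h.mem n)).symm

theorem trace_mul_sub_nonneg (h : IsSweep r X Q Q') (n : Fin N) :
    0 ≤ trace (tuckerGrad X (hyb Q Q' n) n * (Q' n - Q n)) := by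
  rw [mul_sub, trace_sub, sub_nonneg]
  exact h.isMaxOn n (h.mem n)

theorem tuckerForm_le (h : IsSweep r X Q Q') : tuckerForm X Q ≤ tuckerForm X Q' := by
  rw [← sub_nonneg, tuckerForm_sub_eq_sum_trace]
  exact Finset.sum_nonneg fun n _ => h.trace_mul_sub_nonneg n

theorem trace_sub_le_tuckerForm_sub (h : IsSweep r X Q Q') (n : Fin N) :
    trace (tuckerGrad X (hyb Q Q' n) n * Q' n) - trace (tuckerGrad X (hyb Q Q' n) n * Q n) ≤
      tuckerForm X Q' - tuckerForm X Q := by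
  rw [tuckerForm_sub_eq_sum_trace, ← trace_sub, ← mul_sub]
  exact Finset.single_le_sum (fun m _ => h.trace_mul_sub_nonneg m) (Finset.mem_univ n)

end IsSweep

end Sweep

section SweepAsymptotics
open scoped Matrix.Norms.Frobenius Topology

variable {N : ℕ} {I r : Fin N → ℕ} {X : (∀ n, Fin (I n)) → ℝ}
  {P : ∀ n, Matrix (Fin (I n)) (Fin (I n)) ℝ}

/-- Block-nondegeneracy of a maximizer, in terms of the projections `P`: each `P n` is the spectral
projection onto the leading eigenspace of the block gradient, separated by a spectral gap. -/
def HasBlockGaps (X : (∀ n, Fin (I n)) → ℝ) (P : ∀ n, Matrix (Fin (I n)) (Fin (I n)) ℝ) : Prop :=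
  ∀ n, ∃ a b, b < a ∧ HasSpectralGap (tuckerGrad X P n) (P n) a b

variable {β : Type*} {l : Filter β} {Q Q' : β → ∀ n, Matrix (Fin (I n)) (Fin (I n)) ℝ}

theorem tendsto_hyb (n : Fin N) (hQ : Tendsto Q l (𝓝 P))
    (hQ' : ∀ m < n, Tendsto (fun i => Q' i m) l (𝓝 (P m))) :
    Tendsto (fun i => hyb (Q i) (Q' i) n) l (𝓝 P) := by
  refine tendsto_pi_nhds.mpr fun m => ?_
  unfold hyb
  split_ifs with hm
  exacts [hQ' m hm, tendsto_pi_nhds.mp hQ m]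

theorem tendsto_of_isSweep (hgap : HasBlockGaps X P)
    (hP : ∀ n, P n ∈ grassmannian (Fin (I n)) (Fin (r n)))
    (h : ∀ᶠ i in l, IsSweep r X (Q i) (Q' i)) (hQ : Tendsto Q l (𝓝 P)) : Tendsto Q' l (𝓝 P) := by
  refine tendsto_pi_nhds.mpr fun n => ?_
  induction n using WellFoundedLT.induction with
  | ind n ih =>
  obtain ⟨a, b, hab, hn⟩ := hgap n
  have hgrad : Tendsto (fun i => 2 / (a - b) *
      ‖tuckerGrad X P n - tuckerGrad X (hyb (Q i) (Q' i) n) n‖) l (𝓝 0) := by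
    have hcont := (contDiff_tuckerGrad X n (p := 0)).continuous.tendsto P
    simpa using ((hcont.comp (tendsto_hyb n hQ ih)).const_sub (tuckerGrad X P n)).norm.const_mul _
  refine tendsto_iff_norm_sub_tendsto_zero.mpr (squeeze_zero' (.of_forall fun _ => norm_nonneg _)
    (h.mono fun i hi => ?_) hgrad)
  rw [norm_sub_rev]
  exact hn.norm_sub_le hab (isStarProjection_of_mem_grassmannian (hP n))
    (isStarProjection_of_mem_grassmannian (hi.mem' n))
    ((trace_of_mem_grassmannian (hP n)).trans (trace_of_mem_grassmannian (hi.mem' n)).symm)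
    (hi.isMaxOn n (hP n))

theorem exists_eventually_norm_sub_sq_le_of_isSweep (hgap : HasBlockGaps X P)
    (h : ∀ᶠ i in l, IsSweep r X (Q i) (Q' i)) (hQ : Tendsto Q l (𝓝 P))
    (hQ' : Tendsto Q' l (𝓝 P)) :
    ∃ C ≥ 0, ∀ᶠ i in l, ‖Q' i - Q i‖ ^ 2 ≤ C * (tuckerForm X (Q' i) - tuckerForm X (Q i)) := by
  have hblock (n : Fin N) : ∃ c > 0, ∀ᶠ i in l,
      c * ‖Q' i n - Q i n‖ ^ 2 ≤ tuckerForm X (Q' i) - tuckerForm X (Q i) := by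
    obtain ⟨a, b, hab, hn⟩ := hgap n
    obtain ⟨b', hbb', hb'a⟩ := exists_between hab
    obtain ⟨a', hb'a', ha'a⟩ := exists_between hb'a
    refine ⟨(a' - b') / 2, by linarith, ?_⟩
    have hgrad := ((contDiff_tuckerGrad X n (p := 0)).continuous.tendsto P).comp
      (tendsto_hyb n hQ fun m _ => tendsto_pi_nhds.mp hQ' m)
    have hQn := tendsto_pi_nhds.mp hQ' n
    filter_upwards [h, (hgrad.prodMk_nhds hQn).eventually (hn.eventually ha'a hbb')] with i hi hgap
    have hproj := isStarProjection_of_mem_grassmannian (hi.mem' n)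
    exact ((hgap (hi.isHermitian_tuckerGrad n) hproj (hi.commute n)).mul_norm_sub_sq_le hproj
      (isStarProjection_of_mem_grassmannian (hi.mem n)) (hi.trace_eq n)).trans
      (hi.trace_sub_le_tuckerForm_sub n)
  choose c hc hcn using hblock
  have hS : 0 ≤ ∑ n, (c n)⁻¹ := Finset.sum_nonneg fun n _ => (inv_pos.mpr (hc n)).le
  refine ⟨∑ n, (c n)⁻¹, hS, ?_⟩
  filter_upwards [h, eventually_all.mpr hcn] with i hi hle
  have hD := sub_nonneg.mpr hi.tuckerForm_le
  rw [← Real.le_sqrt (norm_nonneg _) (mul_nonneg hS hD),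
    pi_norm_le_iff_of_nonneg (Real.sqrt_nonneg _)]
  refine fun n => Real.le_sqrt_of_sq_le (((le_inv_mul_iff₀ (hc n)).mpr (hle n)).trans ?_)
  gcongr
  exact Finset.single_le_sum (f := fun n => (c n)⁻¹) (fun m _ => (inv_pos.mpr (hc m)).le)
    (Finset.mem_univ n)

theorem norm_sub_update_hyb_le (Q Q' : ∀ n, Matrix (Fin (I n)) (Fin (I n)) ℝ) (n : Fin N) :
    ‖Q - Function.update (hyb Q Q' n) n (Q' n)‖ ≤ ‖Q' - Q‖ := by
  refine (pi_norm_le_iff_of_nonneg (norm_nonneg _)).mpr fun m => ?_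
  have hblock : Function.update (hyb Q Q' n) n (Q' n) m = Q' m ∨
      Function.update (hyb Q Q' n) n (Q' n) m = Q m := by
    unfold hyb
    grind
  obtain hm | hm := hblock
  · rw [Pi.sub_apply, hm, norm_sub_rev]
    exact norm_le_pi_norm (Q' - Q) m
  · rw [Pi.sub_apply, hm, sub_self, norm_zero]
    exact norm_nonneg _

theorem exists_eventually_norm_tangentPart_le_of_isSweep
    (h : ∀ᶠ i in l, IsSweep r X (Q i) (Q' i)) (hQ : Tendsto Q l (𝓝 P))
    (hQ' : Tendsto Q' l (𝓝 P)) :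
    ∃ L ≥ 0, ∀ᶠ i in l,
      ‖fun n => tangentPart (Q i n) (tuckerGrad X (Q i) n)‖ ≤ L * ‖Q' i - Q i‖ := by
  have hblock (n : Fin N) : ∃ L : NNReal, ∀ᶠ i in l,
      ‖tangentPart (Q i n) (tuckerGrad X (Q i) n)‖ ≤ L * ‖Q' i - Q i‖ := by
    obtain ⟨L, t, ht, hL⟩ := (contDiff_tangentPart_tuckerGrad X n
      (p := 1)).contDiffAt.exists_lipschitzOnWith (x := P)
    let R i := Function.update (hyb (Q i) (Q' i) n) n (Q' i n)
    have hR : Tendsto R l (𝓝 P) := by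
      have := (tendsto_hyb n hQ fun m _ => tendsto_pi_nhds.mp hQ' m).update n
        (tendsto_pi_nhds.mp hQ' n)
      rwa [Function.update_eq_self] at this
    refine ⟨L, ?_⟩
    filter_upwards [h, hQ ht, hR ht] with i hi hQi hRi
    have hlip := hL.norm_sub_le hQi hRi
    simp only [R, Function.update_self, hi.tangentPart_update_eq_zero n, sub_zero] at hlip
    exact hlip.trans (by gcongr; exact norm_sub_update_hyb_le (Q i) (Q' i) n)
  choose L hL using hblock
  refine ⟨∑ n, L n, by positivity, ?_⟩
  filter_upwards [eventually_all.mpr hL] with i hi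
  refine (pi_norm_le_iff_of_nonneg (by positivity)).mpr fun n => (hi n).trans ?_
  gcongr
  exact Finset.single_le_sum (f := fun n => (L n : ℝ)) (fun m _ => (L m).2) (Finset.mem_univ n)

end SweepAsymptotics

section KurdykaLojasiewicz
open scoped Matrix.Norms.Frobenius Topology

theorem one_sub_mul_sub_le_rpow_mul {s s' θ : ℝ} (hs : 0 < s) (hs' : 0 ≤ s')
    (hθ : θ ∈ Set.Ioo 0 1) : (1 - θ) * (s - s') ≤ s ^ θ * (s ^ (1 - θ) - s' ^ (1 - θ)) := by
  have hbern := rpow_one_add_le_one_add_mul_self (s := s' / s - 1)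
    (by linarith [div_nonneg hs' hs.le]) (p := 1 - θ) (by linarith [hθ.2]) (by linarith [hθ.1])
  rw [add_sub_cancel, Real.div_rpow hs' hs.le, div_le_iff₀ (by positivity)] at hbern
  have hsplit : s ^ θ * s ^ (1 - θ) = s := by
    rw [← Real.rpow_add hs, add_sub_cancel, Real.rpow_one]
  calc (1 - θ) * (s - s')
      = s - s ^ θ * ((1 + (1 - θ) * (s' / s - 1)) * s ^ (1 - θ)) := by
        rw [mul_left_comm, hsplit]
        field_simp
        ring
    _ ≤ s ^ θ * (s ^ (1 - θ) - s' ^ (1 - θ)) := by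
        rw [mul_sub (s ^ θ), hsplit]
        gcongr

theorem le_mul_rpow_sub_rpow {s s' d C L κ θ : ℝ} (hθ : θ ∈ Set.Ioo 0 1) (hκ : 0 < κ) (hd : 0 ≤ d)
    (hs' : 0 ≤ s') (hs : s' ≤ s) (hdrop : d ^ 2 ≤ C * (s - s')) (hkl : κ * s ^ θ ≤ L * d) :
    d ≤ C * L / (κ * (1 - θ)) * (s ^ (1 - θ) - s' ^ (1 - θ)) := by
  obtain rfl | hpos := (hs'.trans hs).eq_or_lt
  · obtain rfl := hs.antisymm hs'
    have : d = 0 := by simpa using hdrop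
    simp [this]
  have hLd : 0 < L * d := (by positivity : 0 < κ * s ^ θ).trans_le hkl
  have hd : 0 < d := hd.lt_of_ne' (right_ne_zero_of_mul hLd.ne')
  have hL : 0 < L := pos_of_mul_pos_left hLd hd.le
  have hC : 0 < C := pos_of_mul_pos_left ((by positivity : 0 < d ^ 2).trans_le hdrop)
    (sub_nonneg.mpr hs)
  have hθ' : 0 < 1 - θ := sub_pos.mpr hθ.2
  rw [div_mul_eq_mul_div, le_div_iff₀ (by positivity)]
  refine le_of_mul_le_mul_left ?_ (by positivity : 0 < s ^ θ)
  calc s ^ θ * (d * (κ * (1 - θ)))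
      = (1 - θ) * ((κ * s ^ θ) * d) := by ring
    _ ≤ (1 - θ) * (L * d * d) := by gcongr
    _ = L * (1 - θ) * d ^ 2 := by ring
    _ ≤ L * (1 - θ) * (C * (s - s')) := by gcongr
    _ = C * L * ((1 - θ) * (s - s')) := by ring
    _ ≤ C * L * (s ^ θ * (s ^ (1 - θ) - s' ^ (1 - θ))) :=
        mul_le_mul_of_nonneg_left (one_sub_mul_sub_le_rpow_mul hpos hs' hθ) (by positivity)
    _ = s ^ θ * (C * L * (s ^ (1 - θ) - s' ^ (1 - θ))) := by ring

theorem cauchySeq_of_dist_le_sub {E : Type*} [PseudoMetricSpace E] {x : ℕ → E} {p : E} {ρ : ℝ}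
    {φ : ℕ → ℝ} (hφ : 0 ≤ φ 0) (h0 : dist (x 0) p + φ 0 < ρ)
    (hstep : ∀ k, dist (x k) p < ρ →
      0 ≤ φ (k + 1) ∧ dist (x k) (x (k + 1)) ≤ φ k - φ (k + 1)) :
    (∀ k, dist (x k) p ≤ dist (x 0) p + φ 0) ∧ CauchySeq x := by
  have hinv (k : ℕ) : 0 ≤ φ k ∧ dist (x k) p + φ k ≤ dist (x 0) p + φ 0 := by
    induction k with
    | zero => exact ⟨hφ, le_rfl⟩
    | succ k ih =>
      obtain ⟨hφk, hdist⟩ := hstep k (by linarith)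
      exact ⟨hφk, by linarith [dist_triangle_left (x (k + 1)) p (x k)]⟩
  have hdist (k : ℕ) : dist (x k) (x (k + 1)) ≤ φ k - φ (k + 1) :=
    (hstep k (by linarith [hinv k])).2
  refine ⟨fun k => by linarith [hinv k], cauchySeq_of_summable_dist <|
    summable_of_sum_range_le (c := φ 0) (fun k => dist_nonneg) fun m => ?_⟩
  calc ∑ k ∈ Finset.range m, dist (x k) (x (k + 1))
      ≤ ∑ k ∈ Finset.range m, (φ k - φ (k + 1)) := Finset.sum_le_sum fun k _ => hdist k
    _ = φ 0 - φ m := Finset.sum_range_sub' φ m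
    _ ≤ φ 0 := sub_le_self _ (hinv m).1

end KurdykaLojasiewicz

section LocalConvergence
open scoped Matrix.Norms.Frobenius Topology

variable {N : ℕ} {I r : Fin N → ℕ} {X : (∀ n, Fin (I n)) → ℝ}
  {P : ∀ n, Matrix (Fin (I n)) (Fin (I n)) ℝ}

/-- The product of Grassmannians, on which `tuckerForm X` takes the values of the HOOI objective. -/
def grassmannians (I r : Fin N → ℕ) : Set (∀ n, Matrix (Fin (I n)) (Fin (I n)) ℝ) :=
  Set.univ.pi fun n => grassmannian (Fin (I n)) (Fin (r n))

theorem eventually_descent_of_isSweep (hgap : HasBlockGaps X P) (hP : P ∈ grassmannians I r)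
    (hmax : IsLocalMaxOn (tuckerForm X) (grassmannians I r) P) :
    ∃ θ ∈ Set.Ioo (0 : ℝ) 1, ∃ κ > 0, ∃ C ≥ 0, ∃ L ≥ 0, ∀ᶠ Q in 𝓝 P, ∀ Q', IsSweep r X Q Q' →
      tuckerForm X Q' ≤ tuckerForm X P ∧
      ‖Q' - Q‖ ^ 2 ≤ C * (tuckerForm X Q' - tuckerForm X Q) ∧
      κ * (tuckerForm X P - tuckerForm X Q) ^ θ ≤ L * ‖Q' - Q‖ := by
  let l := comap Prod.fst (𝓝 P) ⊓ 𝓟 {p | IsSweep r X p.1 p.2}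
  have hsweep : ∀ᶠ p in l, IsSweep r X p.1 p.2 := mem_inf_of_right (mem_principal_self _)
  have hfst : Tendsto Prod.fst l (𝓝 P) := tendsto_comap.mono_left inf_le_left
  have hsnd : Tendsto Prod.snd l (𝓝 P) :=
    tendsto_of_isSweep hgap (fun n => hP n trivial) hsweep hfst
  obtain ⟨C, hC₀, hC⟩ := exists_eventually_norm_sub_sq_le_of_isSweep hgap hsweep hfst hsnd
  obtain ⟨L, hL₀, hL⟩ := exists_eventually_norm_tangentPart_le_of_isSweep hsweep hfst hsnd
  obtain ⟨θ, hθ, κ, hκ, ε, hε, hkl⟩ := exists_mul_rpow_le_norm_tangentPart X (tuckerForm X P)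
  have hnear : ∀ᶠ p in l, tuckerForm X P - ε ≤ tuckerForm X p.1 :=
    (((contDiff_tuckerForm X (p := 0)).continuous.tendsto P).comp hfst).eventually_const_le
      (by linarith)
  have hle := hsnd.eventually (eventually_nhdsWithin_iff.mp hmax)
  refine ⟨θ, hθ, κ, hκ, C, hC₀, L, hL₀, ?_⟩
  suffices hev : ∀ᶠ p in l, tuckerForm X p.2 ≤ tuckerForm X P ∧
      ‖p.2 - p.1‖ ^ 2 ≤ C * (tuckerForm X p.2 - tuckerForm X p.1) ∧
      κ * (tuckerForm X P - tuckerForm X p.1) ^ θ ≤ L * ‖p.2 - p.1‖ from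
    (eventually_comap.mp (eventually_inf_principal.mp hev)).mono fun Q h Q' => h (Q, Q') rfl
  filter_upwards [hsweep, hC, hL, hnear, hle] with p hp hCp hLp hεp hlep
  have hle : tuckerForm X p.2 ≤ tuckerForm X P := hlep fun n _ => hp.mem' n
  refine ⟨hle, hCp, ?_⟩
  obtain hpos | hzero := (sub_nonneg.mpr (hp.tuckerForm_le.trans hle)).lt_or_eq
  · have hproj (n : Fin N) := isStarProjection_of_mem_grassmannian (hp.mem n)
    exact (hkl _ hproj hpos (by linarith)).trans hLp
  · rw [← hzero, Real.zero_rpow hθ.1.ne', mul_zero]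
    positivity

theorem isCompact_grassmannians : IsCompact (grassmannians I r) :=
  isCompact_univ_pi fun _ => isCompact_grassmannian

theorem tendsto_const_mul_sub_rpow (X : (∀ n, Fin (I n)) → ℝ)
    (P : ∀ n, Matrix (Fin (I n)) (Fin (I n)) ℝ) (K : ℝ) {p : ℝ} (hp : 0 < p) :
    Tendsto (fun Q => dist Q P + K * (tuckerForm X P - tuckerForm X Q) ^ p) (𝓝 P) (𝓝 0) := by
  have hF := (contDiff_tuckerForm X (p := 0)).continuous
  have hcont : Continuous fun Q => dist Q P + K * (tuckerForm X P - tuckerForm X Q) ^ p :=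
    (continuous_id.dist continuous_const).add <| continuous_const.mul <|
      (continuous_const.sub hF).rpow_const fun _ => .inr hp.le
  simpa [Real.zero_rpow hp.ne'] using hcont.tendsto P

theorem eq_of_forall_mul_rpow_le {Q : ℕ → ∀ n, Matrix (Fin (I n)) (Fin (I n)) ℝ}
    {R : ∀ n, Matrix (Fin (I n)) (Fin (I n)) ℝ} {κ L θ v : ℝ} (hκ : 0 < κ) (hθ : 0 < θ)
    (hlim : Tendsto Q atTop (𝓝 R)) (hR : tuckerForm X R ≤ v)
    (hkl : ∀ k, κ * (v - tuckerForm X (Q k)) ^ θ ≤ L * ‖Q (k + 1) - Q k‖) :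
    tuckerForm X R = v := by
  have hF : Continuous (tuckerForm X) := (contDiff_tuckerForm X (p := 0)).continuous
  have hleft : Tendsto (fun k => κ * (v - tuckerForm X (Q k)) ^ θ) atTop
      (𝓝 (κ * (v - tuckerForm X R) ^ θ)) :=
    ((tendsto_const_nhds.sub ((hF.tendsto R).comp hlim)).rpow_const (.inr hθ.le)).const_mul κ
  have hright : Tendsto (fun k => L * ‖Q (k + 1) - Q k‖) atTop (𝓝 (L * 0)) := by
    simpa using (((tendsto_add_atTop_iff_nat 1).mpr hlim).sub hlim).norm.const_mul L
  have hle := le_of_tendsto_of_tendsto' hleft hright hkl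
  refine hR.antisymm (not_lt.mp fun hlt => ?_)
  have := sub_pos.mpr hlt
  have : 0 < κ * (v - tuckerForm X R) ^ θ := by positivity
  linarith

theorem exists_tendsto_of_isSweep (hgap : HasBlockGaps X P) (hP : P ∈ grassmannians I r)
    (hmax : IsLocalMaxOn (tuckerForm X) (grassmannians I r) P) :
    ∀ᶠ Q₀ in 𝓝 P, ∀ Q : ℕ → ∀ n, Matrix (Fin (I n)) (Fin (I n)) ℝ, Q 0 = Q₀ →
      (∀ k, IsSweep r X (Q k) (Q (k + 1))) → ∃ R ∈ grassmannians I r,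
        IsLocalMaxOn (tuckerForm X) (grassmannians I r) R ∧ Tendsto Q atTop (𝓝 R) := by
  obtain ⟨θ, hθ, κ, hκ, C, hC, L, hL, hdescent⟩ := eventually_descent_of_isSweep hgap hP hmax
  obtain ⟨ρ, hρ, hball⟩ := Metric.eventually_nhds_iff_ball.mp
    (hdescent.and (eventually_nhdsWithin_iff.mp hmax))
  have hθ' : 0 < 1 - θ := sub_pos.mpr hθ.2
  filter_upwards [(tendsto_const_mul_sub_rpow X P (C * L / (κ * (1 - θ))) hθ').eventually_lt_const
    hρ, eventually_nhdsWithin_iff.mp hmax] with Q₀ hnear hQ₀ Q hQ hsweep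
  subst hQ
  set φ := fun k => C * L / (κ * (1 - θ)) * (tuckerForm X P - tuckerForm X (Q k)) ^ (1 - θ)
  have hmem (k : ℕ) : Q k ∈ grassmannians I r := fun n _ => (hsweep k).mem n
  have hφ (k : ℕ) (hk : tuckerForm X (Q k) ≤ tuckerForm X P) : 0 ≤ φ k := by
    have := sub_nonneg.mpr hk
    positivity
  obtain ⟨hstay, hcauchy⟩ := cauchySeq_of_dist_le_sub (hφ 0 (hQ₀ (hmem 0))) hnear fun k hk => by
    obtain ⟨hle, hdrop, hkl⟩ := (hball _ hk).1 _ (hsweep k)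
    refine ⟨hφ _ hle, ?_⟩
    rw [dist_eq_norm', ← mul_sub]
    exact le_mul_rpow_sub_rpow hθ hκ (norm_nonneg _) (sub_nonneg.mpr hle)
      (sub_le_sub_left (hsweep k).tuckerForm_le _) (by simpa using hdrop) hkl
  obtain ⟨R, hR, hlim⟩ :=
    cauchySeq_tendsto_of_isComplete isCompact_grassmannians.isComplete hmem hcauchy
  have hRball : R ∈ Metric.ball P ρ :=
    (le_of_tendsto (hlim.dist tendsto_const_nhds) (.of_forall hstay)).trans_lt hnear
  have hRP : tuckerForm X R = tuckerForm X P :=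
    eq_of_forall_mul_rpow_le hκ hθ.1 hlim ((hball R hRball).2 hR) fun k =>
      ((hball _ ((hstay k).trans_lt hnear)).1 _ (hsweep k)).2.2
  refine ⟨R, hR, ?_, hlim⟩
  filter_upwards [self_mem_nhdsWithin,
    mem_nhdsWithin_of_mem_nhds (Metric.isOpen_ball.mem_nhds hRball)] with Q' hQ' hQ'ball
  exact hRP ▸ (hball Q' hQ'ball).2 hQ'

end LocalConvergence

section Transfer
open scoped Matrix.Norms.Frobenius Topology

theorem isLocalMaxOn_image_of_isCompact {α β γ : Type*} [TopologicalSpace α] [TopologicalSpace β]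
    [T2Space β] [Preorder γ] {f : β → γ} {g : α → β} {S : Set α} {b : β} (hS : IsCompact S)
    (hg : ContinuousOn g S) (h : ∀ a ∈ S, g a = b → IsLocalMaxOn (f ∘ g) S a) :
    IsLocalMaxOn f (g '' S) b := by
  have : CompactSpace S := isCompact_iff_compactSpace.mp hS
  have hfiber := hg.domRestrict.isClosedMap.eventually_nhds_fiber (p := fun a => f (g a) ≤ f b) b
    fun a (ha : g a = b) => (eventually_nhds_subtype_iff S a fun a => f (g a) ≤ f b).mpr <|
      (h a a.2 ha).mono fun _ hle => hle.trans_eq (congrArg f ha)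
  refine eventually_nhdsWithin_iff.mpr (hfiber.mono ?_)
  rintro _ hy ⟨a, ha, rfl⟩
  exact hy ⟨a, ha⟩ rfl

theorem exists_mul_eq_of_mul_transpose_eq {m k R : Type*} [Fintype m] [Fintype k] [DecidableEq k]
    [CommRing R] {A B : Matrix m k R} (hA : Aᵀ * A = 1) (hB : Bᵀ * B = 1)
    (h : A * Aᵀ = B * Bᵀ) : ∃ O : Matrix k k R, O * Oᵀ = 1 ∧ B * O = A := by
  have hBA : B * (Bᵀ * A) = A := by
    rw [← Matrix.mul_assoc, ← h, Matrix.mul_assoc, hA, Matrix.mul_one]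
  refine ⟨Bᵀ * A, ?_, hBA⟩
  rw [transpose_mul, transpose_transpose, Matrix.mul_assoc, ← Matrix.mul_assoc A, h,
    Matrix.mul_assoc B, ← Matrix.mul_assoc, hB, Matrix.one_mul]

theorem tendsto_fro_sub_iff {m n β : Type*} [Fintype m] [Fintype n] {l : Filter β}
    {M : β → Matrix m n ℝ} {M₀ : Matrix m n ℝ} :
    Tendsto (fun i => fro (M i - M₀)) l (𝓝 0) ↔ Tendsto M l (𝓝 M₀) := by
  simp only [fro, froSq, ← frobenius_norm_sq, Real.sqrt_sq (norm_nonneg _)]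
  exact tendsto_iff_norm_sub_tendsto_zero.symm

variable {N : ℕ} {I r : Fin N → ℕ}

theorem hasBasis_nhds_tdist (A : ∀ n, Matrix (Fin (I n)) (Fin (r n)) ℝ) :
    (𝓝 A).HasBasis (0 < ·) fun ε => {B | tdist B A ≤ ε} := by
  have htdist (B : ∀ n, Matrix (Fin (I n)) (Fin (r n)) ℝ) :
      tdist B A = √(∑ n, ‖B n - A n‖ ^ 2) := by
    simp only [tdist, froSq, frobenius_norm_sq]
  have hcont : Continuous fun B => tdist B A := by
    simp only [htdist]
    fun_prop
  refine Metric.nhds_basis_closedBall.to_hasBasis' (fun ε hε => ⟨ε, hε, fun B hB => ?_⟩)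
    fun ε hε => hcont.continuousAt.eventually_le_const (by simpa [htdist] using hε)
  refine (dist_pi_le_iff hε.le).mpr fun n => le_trans ?_ hB
  rw [dist_eq_norm, htdist]
  exact Real.le_sqrt_of_sq_le
    (Finset.single_le_sum (f := fun n => ‖B n - A n‖ ^ 2) (fun _ _ => sq_nonneg _)
      (Finset.mem_univ n))

variable {X : (∀ n, Fin (I n)) → ℝ} {A : ∀ n, Matrix (Fin (I n)) (Fin (r n)) ℝ}

theorem localMax_iff : LocalMax X A ↔ TFeas A ∧ IsLocalMaxOn (fval X) {B | TFeas B} A := by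
  refine and_congr_right fun _ => ?_
  rw [IsLocalMaxOn, IsMaxFilter, eventually_nhdsWithin_iff,
    (hasBasis_nhds_tdist A).eventually_iff]
  simp only [Set.mem_ofPred_eq, imp.swap]

theorem isCompact_setOf_tFeas :
    IsCompact {A : ∀ n, Matrix (Fin (I n)) (Fin (r n)) ℝ | TFeas A} := by
  convert isCompact_univ_pi fun n => isCompact_setOf_transpose_mul_eq_one (Fin (I n)) (Fin (r n))
    using 1
  ext A
  simp [TFeas]

theorem continuous_projTuple :
    Continuous (projTuple : (∀ n, Matrix (Fin (I n)) (Fin (r n)) ℝ) → _) := by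
  unfold projTuple
  fun_prop

theorem image_projTuple_setOf_tFeas :
    projTuple '' {A : ∀ n, Matrix (Fin (I n)) (Fin (r n)) ℝ | TFeas A} = grassmannians I r := by
  ext P
  constructor
  · rintro ⟨A, hA, rfl⟩ n -
    exact ⟨A n, hA n, rfl⟩
  · intro hP
    choose A hA hAP using fun n => hP n trivial
    exact ⟨A, hA, funext hAP⟩

theorem isLocalMaxOn_fval_of_projTuple_eq {B : ∀ n, Matrix (Fin (I n)) (Fin (r n)) ℝ}
    (hA : TFeas A) (hB : TFeas B) (h : projTuple A = projTuple B)
    (hmax : IsLocalMaxOn (fval X) {C | TFeas C} A) : IsLocalMaxOn (fval X) {C | TFeas C} B := by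
  choose O hO hBO using fun n => exists_mul_eq_of_mul_transpose_eq (hA n) (hB n) (congrFun h n)
  let φ (C : ∀ n, Matrix (Fin (I n)) (Fin (r n)) ℝ) (n : Fin N) := C n * O n
  have hφ (C) : fval X (φ C) = fval X C := by
    simp only [fval_eq_tuckerForm]
    congr 1 with n : 1
    simp only [φ, projTuple, transpose_mul, Matrix.mul_assoc]
    rw [← Matrix.mul_assoc (O n), hO, Matrix.one_mul]
  have hfeas (C) (hC : TFeas C) : TFeas (φ C) := fun n => by
    simp only [φ, transpose_mul, Matrix.mul_assoc]
    rw [← Matrix.mul_assoc (C n)ᵀ, hC n, Matrix.one_mul, mul_eq_one_comm.mp (hO n)]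
  have hcont : Continuous φ := by
    fun_prop
  have htend : Tendsto φ (𝓝[{C | TFeas C}] B) (𝓝[{C | TFeas C}] A) := by
    have hφB : φ B = A := funext hBO
    exact hφB ▸ hcont.continuousWithinAt.tendsto_nhdsWithin hfeas
  filter_upwards [htend.eventually hmax] with C hC
  rwa [hφ, fval_eq_tuckerForm X A, h, ← fval_eq_tuckerForm] at hC

theorem localMax_iff_isLocalMaxOn_tuckerForm (hA : TFeas A) :
    LocalMax X A ↔ IsLocalMaxOn (tuckerForm X) (grassmannians I r) (projTuple A) := by
  rw [localMax_iff, and_iff_right hA, ← image_projTuple_setOf_tFeas]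
  have hcomp : fval (r := r) X = tuckerForm X ∘ projTuple := funext (fval_eq_tuckerForm X)
  constructor
  · intro hmax
    refine isLocalMaxOn_image_of_isCompact isCompact_setOf_tFeas
      continuous_projTuple.continuousOn fun B hB hBA => ?_
    rw [← hcomp]
    exact isLocalMaxOn_fval_of_projTuple_eq hA hB hBA.symm hmax
  · intro hmax
    rw [hcomp]
    exact (continuous_projTuple.continuousWithinAt.tendsto_nhdsWithin
      (Set.mapsTo_image _ _)).eventually hmax

theorem hasBlockGaps_projTuple (hA : TFeas A) (hnd : NonDeg X A)
    (hmax : IsLocalMaxOn (tuckerForm X) (grassmannians I r) (projTuple A)) :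
    HasBlockGaps X (projTuple A) := fun n => by
  have hself : Function.update (projTuple A) n (A n * (A n)ᵀ) = projTuple A :=
    Function.update_eq_self n _
  have hcont : Continuous fun B : Matrix (Fin (I n)) (Fin (r n)) ℝ =>
      Function.update (projTuple A) n (B * Bᵀ) :=
    continuous_const.update n (by fun_prop)
  have hmem (B : Matrix (Fin (I n)) (Fin (r n)) ℝ) (hB : Bᵀ * B = 1) :
      Function.update (projTuple A) n (B * Bᵀ) ∈ grassmannians I r := fun m _ => by
    obtain rfl | hm := eq_or_ne m n
    · simpa using ⟨B, hB, rfl⟩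
    · simpa [hm] using ⟨A m, hA m, rfl⟩
  have hblock : IsLocalMaxOn (fun B => trace (Gmat X A n * (Gmat X A n)ᵀ * (B * Bᵀ)))
      {B : Matrix (Fin (I n)) (Fin (r n)) ℝ | Bᵀ * B = 1} (A n) := by
    simp only [Gmat_mul_transpose, ← tuckerForm_update]
    have htend := hcont.continuousWithinAt.tendsto_nhdsWithin (x := A n) hmem
    rw [hself] at htend
    filter_upwards [htend.eventually hmax] with B hB
    rwa [hself]
  rw [← Gmat_mul_transpose]
  exact exists_hasSpectralGap_of_isLocalMaxOn_trace (hnd n) (hA n) hblock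

end Transfer

end HOOI

open HOOI

/-- For every HOOI sequence starting sufficiently close to a
block-nondegenerate local maximizer, the projection matrices converge to those of
some local maximizer. -/
theorem stmt16 {N : ℕ} {I r : Fin N → ℕ} (hr : ∀ n, r n ≤ I n)
    (X : ((n : Fin N) → Fin (I n)) → ℝ)
    (Astar : (n : Fin N) → Matrix (Fin (I n)) (Fin (r n)) ℝ)
    (hstar : LocalMax X Astar) (hnd : NonDeg X Astar) :
    ∃ δ > (0 : ℝ), ∀ A : ℕ → (n : Fin N) → Matrix (Fin (I n)) (Fin (r n)) ℝ,
      IsHOOI X A → tdist (A 0) Astar ≤ δ →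
      ∃ Abar : (n : Fin N) → Matrix (Fin (I n)) (Fin (r n)) ℝ,
        TFeas Abar ∧ LocalMax X Abar ∧
        ∀ n, Filter.Tendsto (fun k => fro (A k n * (A k n)ᵀ - Abar n * (Abar n)ᵀ))
          Filter.atTop (nhds 0) := by
  have hmax := (localMax_iff_isLocalMaxOn_tuckerForm hstar.1).mp hstar
  have hconv := exists_tendsto_of_isSweep (hasBlockGaps_projTuple hstar.1 hnd hmax)
    (image_projTuple_setOf_tFeas.subset (Set.mem_image_of_mem _ hstar.1)) hmax
  obtain ⟨δ, hδ, hstart⟩ := (hasBasis_nhds_tdist Astar).eventually_iff.mp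
    (continuous_projTuple.continuousAt.eventually hconv)
  refine ⟨δ, hδ, fun A hA hA₀ => ?_⟩
  obtain ⟨P, hP, hPmax, hlim⟩ :=
    hstart hA₀ (fun k => projTuple (A k)) rfl (isSweep_of_isHOOI hA)
  obtain ⟨Abar, hfeas, rfl⟩ := image_projTuple_setOf_tFeas.superset hP
  refine ⟨Abar, hfeas, (localMax_iff_isLocalMaxOn_tuckerForm hfeas).mpr hPmax, fun n => ?_⟩
  exact tendsto_fro_sub_iff.mpr (tendsto_pi_nhds.mp hlim n)
end

section
/- Let Ā and Ã be feasible points with ĀₙĀₙᵀ = ÃₙÃₙᵀ for all n. If Ã is a critical point, then Ā is also a critical point. -/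
open Matrix BigOperators Filter

/-! `Gₙ(A)` is the unfolding of `X` times the Kronecker product `K` of the factors `A_m`, `m ≠ n`.
Since `K Kᵀ` is the Kronecker product of the matrices `A_m A_mᵀ`, the Gram matrix
`S = Gₙ(A) Gₙ(A)ᵀ` depends on `A` only through these. So does the criticality equation
`S Aₙ = Aₙ Aₙᵀ S Aₙ`: right multiplication by `Aₙᵀ` puts it in terms of `S` and `Aₙ Aₙᵀ`, and over
`ℝ` no information is lost, because `Y Aₙ Aₙᵀ = 0` forces `Y Aₙ = 0`. -/

section PiKronecker

variable {ι R : Type*} [Fintype ι] [CommSemiring R] {α β γ : ι → Type*}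

/-- The Kronecker product of a finite family of matrices, with rows and columns indexed by
multi-indices; it is the matrix of the simultaneous mode-`i` products of a tensor with all the
factors. Multi-indices are dependent functions, so no ordering of the modes is chosen. -/
def piKronecker (A : (i : ι) → Matrix (α i) (β i) R) :
    Matrix ((i : ι) → α i) ((i : ι) → β i) R :=
  Matrix.of fun p q => ∏ i, A i (p i) (q i)

theorem piKronecker_transpose (A : (i : ι) → Matrix (α i) (β i) R) :
    (piKronecker A)ᵀ = piKronecker fun i => (A i)ᵀ :=
  rfl

theorem piKronecker_mul [DecidableEq ι] [∀ i, Fintype (β i)]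
    (A : (i : ι) → Matrix (α i) (β i) R) (B : (i : ι) → Matrix (β i) (γ i) R) :
    piKronecker A * piKronecker B = piKronecker fun i => A i * B i := by
  ext p q
  simp only [piKronecker, Matrix.mul_apply, Matrix.of_apply, Fintype.prod_sum,
    Finset.prod_mul_distrib]

end PiKronecker

theorem mul_self_mul_conjTranspose_inj {R l m k : Type*} [Fintype m] [Fintype k] [Ring R]
    [PartialOrder R] [StarRing R] [StarOrderedRing R] [NoZeroDivisors R]
    {A : Matrix m k R} {B C : Matrix l m R} :
    B * (A * Aᴴ) = C * (A * Aᴴ) ↔ B * A = C * A := by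
  rw [← sub_eq_zero, ← Matrix.sub_mul, Matrix.mul_self_mul_conjTranspose_eq_zero, Matrix.sub_mul,
    sub_eq_zero]

section Critical

variable {N : ℕ} {I r s : Fin N → ℕ} (X : ((n : Fin N) → Fin (I n)) → ℝ)

/-- The mode-`n` unfolding of the tensor `X`, with columns indexed by the remaining multi-index. -/
def modeUnfold (n : Fin N) :
    Matrix (Fin (I n)) ((m : {m : Fin N // m ≠ n}) → Fin (I m.1)) ℝ :=
  Matrix.of fun j p => X fun i => if h : i = n then Fin.cast (by rw [h]) j else p ⟨i, h⟩

theorem Gmat_eq_modeUnfold_mul_piKronecker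
    (A : (n : Fin N) → Matrix (Fin (I n)) (Fin (r n)) ℝ) (n : Fin N) :
    Gmat X A n = modeUnfold X n * piKronecker fun m : {m : Fin N // m ≠ n} => A m.1 :=
  rfl

theorem Gmat_mul_transpose (A : (n : Fin N) → Matrix (Fin (I n)) (Fin (r n)) ℝ) (n : Fin N) :
    Gmat X A n * (Gmat X A n)ᵀ =
      modeUnfold X n * (piKronecker fun m : {m : Fin N // m ≠ n} => A m.1 * (A m.1)ᵀ) *
        (modeUnfold X n)ᵀ := by
  rw [Gmat_eq_modeUnfold_mul_piKronecker, Matrix.transpose_mul, piKronecker_transpose,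
    Matrix.mul_assoc, ← Matrix.mul_assoc (piKronecker _), piKronecker_mul, ← Matrix.mul_assoc]

theorem Gmat_mul_transpose_congr {A : (n : Fin N) → Matrix (Fin (I n)) (Fin (r n)) ℝ}
    {B : (n : Fin N) → Matrix (Fin (I n)) (Fin (s n)) ℝ} {n : Fin N}
    (hAB : ∀ m ≠ n, A m * (A m)ᵀ = B m * (B m)ᵀ) :
    Gmat X A n * (Gmat X A n)ᵀ = Gmat X B n * (Gmat X B n)ᵀ := by
  have hfactors : (fun m : {m : Fin N // m ≠ n} => A m.1 * (A m.1)ᵀ) =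
      fun m : {m : Fin N // m ≠ n} => B m.1 * (B m.1)ᵀ :=
    funext fun m => hAB m.1 m.2
  rw [Gmat_mul_transpose, Gmat_mul_transpose, hfactors]

variable {X}

theorem critical_iff_mul_mul_transpose {A : (n : Fin N) → Matrix (Fin (I n)) (Fin (r n)) ℝ} :
    Critical X A ↔ ∀ n, Gmat X A n * (Gmat X A n)ᵀ * (A n * (A n)ᵀ) =
      A n * (A n)ᵀ * (Gmat X A n * (Gmat X A n)ᵀ * (A n * (A n)ᵀ)) := by
  refine forall_congr' fun n => ?_
  rw [← Matrix.mul_assoc _ _ (A n), ← Matrix.mul_assoc _ _ (A n * (A n)ᵀ),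
    ← Matrix.conjTranspose_eq_transpose_of_trivial (A n), mul_self_mul_conjTranspose_inj]

end Critical

theorem stmt17_general {N : ℕ} {I r s : Fin N → ℕ} (X : ((n : Fin N) → Fin (I n)) → ℝ)
    (A : (n : Fin N) → Matrix (Fin (I n)) (Fin (r n)) ℝ)
    (B : (n : Fin N) → Matrix (Fin (I n)) (Fin (s n)) ℝ)
    (hproj : ∀ n, A n * (A n)ᵀ = B n * (B n)ᵀ) (hcrit : Critical X B) :
    Critical X A := by
  rw [critical_iff_mul_mul_transpose] at hcrit ⊢
  intro n
  rw [Gmat_mul_transpose_congr X fun m _ => hproj m, hproj n]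
  exact hcrit n

/-- If `Ā` and `Ã` are feasible with `Āₙ Āₙᵀ = Ãₙ Ãₙᵀ` for all
`n` and `Ã` is a critical point, then so is `Ā`. -/
theorem stmt17 {N : ℕ} {I r : Fin N → ℕ} (hr : ∀ n, r n ≤ I n)
    (X : ((n : Fin N) → Fin (I n)) → ℝ)
    (Abar Atil : (n : Fin N) → Matrix (Fin (I n)) (Fin (r n)) ℝ)
    (hAbar : TFeas Abar) (hAtil : TFeas Atil)
    (hproj : ∀ n, Abar n * (Abar n)ᵀ = Atil n * (Atil n)ᵀ)
    (hcrit : Critical X Atil) :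
    Critical X Abar :=
  stmt17_general X Abar Atil hproj hcrit
end
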